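/- arXiv:1506.01755 — 2 statements merged into one kernel-verified Lean document; each statement's English description precedes it below -/
import Mathlib

section
/- There exists a constant C > 0 such that for all integers n ≥ 2, | Σ_{l=2}^{n} (−1)^l C(n,l) ζ(l) − [ 1/2 − n(1 − γ − h_{n−1}) ] | ≤ C · n^{1/4} · exp(−2√(πn)), where ζ(l) = Σ_{j≥1} j^{−l} is the Riemann zeta function at the integer l ≥ 2. (The case m = k = 1 of the asymptotic for H_n(m,k), recovering the asymptotics for differences of zeta values.) -/
open Finset Real

/-- The harmonic number `h_N = ∑_{i=1}^N 1/i`. -/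
noncomputable def harm (N : ℕ) : ℝ := ∑ i ∈ Finset.Icc 1 N, (1 : ℝ) / i

open MeasureTheory Filter Topology

/-!
By the binomial theorem the sum equals `∑ₜ (g t - 1 + n / (t + 1))` over `t = 0, 1, 2, …`, where
`g t = (1 - 1 / (t + 1)) ^ n`. Euler–Maclaurin summation of second order evaluates it as the main
term minus `½ ∫ B₂({t}) g''(t) dt`. Expand the periodized Bernoulli function `B₂({t})` in its
Fourier series `∑ₖ (πk)⁻² cos (2πkt)` and rotate each oscillatory integral to the ray
`t = ρ (1 + i) / 2`. With `q = ρ + 1` and `a = √(n / π)`, the factor `exp (2πikt)` has modulus at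
most `exp (-πρ)` there, while `|1 - 1 / (t + 1)| ≤ exp (-1 / q)`, so up to constants the integrand
is at most a prefactor times `exp (-n / q - πq) = exp (-2√(πn)) * exp (-π (q - a)² / q)`. The last
factor is a bump of width `√a` at `q = a`, which accounts for the power `n ^ (1 / 4)`.
-/

section PeriodizedBernoulli

lemma periodizedBernoulli_coe (k : ℕ) (t : ℝ) :
    periodizedBernoulli k (t : UnitAddCircle) = bernoulliFun k (Int.fract t) := by
  have h_coe : ((Int.fract t : ℝ) : UnitAddCircle) = t := by
    rw [← sub_eq_zero, ← AddCircle.coe_sub, AddCircle.coe_eq_zero_iff]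
    exact ⟨-⌊t⌋, by simp [← Int.self_sub_floor]⟩
  rw [← h_coe, periodizedBernoulli, AddCircle.liftIco_coe_apply]
  exact ⟨Int.fract_nonneg t, by simpa using Int.fract_lt_one t⟩

lemma periodizedBernoulli_coe_of_mem_Icc {k : ℕ} (hk : k ≠ 1) {j : ℤ} {t : ℝ}
    (ht : t ∈ Set.Icc (j : ℝ) (j + 1)) :
    periodizedBernoulli k (t : UnitAddCircle) = bernoulliFun k (t - j) := by
  rw [periodizedBernoulli_coe]
  rcases ht.2.lt_or_eq with hlt | rfl
  · rw [Int.fract_eq_iff.mpr ⟨sub_nonneg.mpr ht.1, by linarith, j, by ring⟩]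
  · simp [bernoulliFun_endpoints_eq_of_ne_one hk]

lemma continuous_periodizedBernoulli_coe {k : ℕ} (hk : k ≠ 1) :
    Continuous fun t : ℝ ↦ periodizedBernoulli k (t : UnitAddCircle) :=
  (periodizedBernoulli.continuous hk).comp (AddCircle.continuous_mk' 1)

lemma hasSum_one_div_pi_mul_sq : HasSum (fun k : ℕ ↦ 1 / (π * k) ^ 2) (1 / 6) := by
  convert! hasSum_zeta_two.mul_left (1 / π ^ 2) using 1
  · ext k
    rw [mul_pow, one_div_mul_one_div]
  · field_simp

lemma hasSum_periodizedBernoulli_two (t : ℝ) :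
    HasSum (fun k : ℕ ↦ 1 / (π * k) ^ 2 * cos (2 * π * k * t))
      (periodizedBernoulli 2 (t : UnitAddCircle)) := by
  have h_series := (hasSum_one_div_nat_pow_mul_cos one_ne_zero
    ⟨Int.fract_nonneg t, (Int.fract_lt_one t).le⟩).mul_left (1 / π ^ 2)
  rw [periodizedBernoulli_coe]
  convert! h_series using 1
  · ext k
    have h_arg : 2 * π * k * Int.fract t = 2 * π * k * t - (k * ⌊t⌋ : ℤ) * (2 * π) := by
      push_cast [Int.fract]
      ring
    rw [h_arg, cos_sub_int_mul_two_pi, mul_pow, ← one_div_mul_one_div, mul_assoc, mul_one]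
  · rw [← bernoulliFun, mul_one]
    norm_num1
    field_simp

lemma norm_fourier_term_le (k : ℕ) (t : ℝ) :
    ‖1 / (π * k) ^ 2 * cos (2 * π * k * t)‖ ≤ 1 / (π * k) ^ 2 := by
  rw [norm_mul, norm_of_nonneg (by positivity)]
  exact mul_le_of_le_one_right (by positivity) (abs_cos_le_one _)

lemma abs_periodizedBernoulli_two_le (t : ℝ) :
    |periodizedBernoulli 2 (t : UnitAddCircle)| ≤ 1 / 6 :=
  (hasSum_periodizedBernoulli_two t).norm_le_of_bounded hasSum_one_div_pi_mul_sq
    fun k ↦ norm_fourier_term_le k t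

lemma integrable_periodizedBernoulli_two_mul {μ : Measure ℝ} {g : ℝ → ℝ} (hg : Integrable g μ) :
    Integrable (fun t : ℝ ↦ periodizedBernoulli 2 (t : UnitAddCircle) * g t) μ :=
  hg.bdd_mul (continuous_periodizedBernoulli_coe (by norm_num)).aestronglyMeasurable
    (.of_forall abs_periodizedBernoulli_two_le)

lemma hasSum_integral_cos_mul {μ : Measure ℝ} {g : ℝ → ℝ} (hg : Integrable g μ) :
    HasSum (fun k : ℕ ↦ 1 / (π * k) ^ 2 * ∫ t, cos (2 * π * k * t) * g t ∂μ)
      (∫ t, periodizedBernoulli 2 (t : UnitAddCircle) * g t ∂μ) := by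
  simp_rw [← integral_const_mul, ← mul_assoc]
  refine hasSum_integral_of_dominated_convergence (fun k t ↦ 1 / (π * k) ^ 2 * ‖g t‖)
    (fun k ↦ (by fun_prop : AEStronglyMeasurable (fun t : ℝ ↦ _) μ).mul hg.1)
    (fun k ↦ .of_forall fun t ↦ ?_)
    (.of_forall fun t ↦ hasSum_one_div_pi_mul_sq.summable.mul_right _) ?_
    (.of_forall fun t ↦ (hasSum_periodizedBernoulli_two t).mul_right _)
  · rw [norm_mul]
    gcongr
    exact norm_fourier_term_le k t
  · simp_rw [tsum_mul_right]
    exact hg.norm.const_mul _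

lemma abs_integral_periodizedBernoulli_two_mul_le {μ : Measure ℝ} {g : ℝ → ℝ} {M : ℝ}
    (hg : Integrable g μ) (hM : ∀ k : ℕ, k ≠ 0 → |∫ t, cos (2 * π * k * t) * g t ∂μ| ≤ M) :
    |∫ t, periodizedBernoulli 2 (t : UnitAddCircle) * g t ∂μ| ≤ M / 6 := by
  rw [← mul_one_div]
  refine (hasSum_integral_cos_mul hg).norm_le_of_bounded
    (hasSum_one_div_pi_mul_sq.mul_left M) fun k ↦ ?_
  rcases eq_or_ne k 0 with rfl | hk
  · simp
  · rw [norm_mul, norm_of_nonneg (by positivity), mul_comm]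
    gcongr
    exact hM k hk

end PeriodizedBernoulli

section EulerMaclaurin

variable {f f' f'' : ℝ → ℝ}

lemma integral_periodizedBernoulli_two_mul_sub_integral {j : ℤ}
    (hf : ∀ t ∈ Set.Icc (j : ℝ) (j + 1), HasDerivAt f (f' t) t)
    (hf' : ∀ t ∈ Set.Icc (j : ℝ) (j + 1), HasDerivAt f' (f'' t) t)
    (hf'' : ContinuousOn f'' (Set.Icc j (j + 1))) :
    1 / 2 * (∫ t in (j : ℝ)..(j + 1), periodizedBernoulli 2 (t : UnitAddCircle) * f'' t)
      - ∫ t in (j : ℝ)..(j + 1), f t = (f' (j + 1) - f' j) / 12 - (f j + f (j + 1)) / 2 := by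
  rw [← Set.uIcc_of_le (by linarith)] at hf hf' hf''
  have h_primitive : ∀ t ∈ Set.uIcc (j : ℝ) (j + 1), HasDerivAt
      (fun t ↦ 1 / 2 * (bernoulliFun 2 (t - j) * f' t) - bernoulliFun 1 (t - j) * f t)
      (1 / 2 * (periodizedBernoulli 2 (t : UnitAddCircle) * f'' t) - f t) t := by
    intro t ht
    have h_two := (hasDerivAt_bernoulliFun 2 (t - j)).comp_sub_const t j
    have h_one := (hasDerivAt_bernoulliFun 1 (t - j)).comp_sub_const t j
    refine (((h_two.mul (hf' t ht)).const_mul (1 / 2)).sub (h_one.mul (hf t ht))).congr_deriv ?_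
    rw [Set.uIcc_of_le (by linarith)] at ht
    rw [periodizedBernoulli_coe_of_mem_Icc (by norm_num) ht]
    simp only [Nat.add_one_sub_one, Nat.sub_self, bernoulliFun_zero]
    push_cast
    ring
  have hf_int : IntervalIntegrable f volume j (j + 1) :=
    ContinuousOn.intervalIntegrable fun t ht ↦ (hf t ht).continuousAt.continuousWithinAt
  have hB_int : IntervalIntegrable
      (fun t : ℝ ↦ 1 / 2 * (periodizedBernoulli 2 (t : UnitAddCircle) * f'' t))
      volume j (j + 1) :=
    (((continuous_periodizedBernoulli_coe (by norm_num)).continuousOn.mul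
      hf'').intervalIntegrable).const_mul _
  rw [← intervalIntegral.integral_const_mul, ← intervalIntegral.integral_sub hB_int hf_int,
    intervalIntegral.integral_eq_sub_of_hasDerivAt h_primitive (hB_int.sub hf_int)]
  simp only [add_sub_cancel_left, sub_self, bernoulliFun_one, bernoulliFun_two]
  ring

lemma sum_range_eq_integral_add_integral_periodizedBernoulli_two
    (hf : ∀ t, 0 ≤ t → HasDerivAt f (f' t) t) (hf' : ∀ t, 0 ≤ t → HasDerivAt f' (f'' t) t)
    (hf'' : ContinuousOn f'' (Set.Ici 0)) (N : ℕ) :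
    ∑ j ∈ range N, f j = (∫ t in (0 : ℝ)..N, f t) - (f N - f 0) / 2 + (f' N - f' 0) / 12
      - 1 / 2 * ∫ t in (0 : ℝ)..N, periodizedBernoulli 2 (t : UnitAddCircle) * f'' t := by
  have h_int {g : ℝ → ℝ} (hg : ContinuousOn g (Set.Ici 0)) (a b : ℕ) :
      IntervalIntegrable g volume a b :=
    (hg.mono fun x hx ↦ (le_min a.cast_nonneg b.cast_nonneg).trans hx.1).intervalIntegrable
  have hf_int := h_int fun t ht ↦ (hf t ht).continuousAt.continuousWithinAt
  have hB_int := h_int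
    ((continuous_periodizedBernoulli_coe (k := 2) (by norm_num)).continuousOn.mul hf'')
  induction N with
  | zero => simp
  | succ N ih =>
    have h_nonneg : ∀ t ∈ Set.Icc ((N : ℤ) : ℝ) ((N : ℤ) + 1), 0 ≤ t := fun t ht ↦
      (Int.cast_nonneg N.cast_nonneg).trans ht.1
    have h_step := integral_periodizedBernoulli_two_mul_sub_integral
      (fun t ht ↦ hf t (h_nonneg t ht)) (fun t ht ↦ hf' t (h_nonneg t ht)) (hf''.mono h_nonneg)
    have hf_add := intervalIntegral.integral_add_adjacent_intervals
      (hf_int 0 N) (hf_int N (N + 1))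
    have hB_add := intervalIntegral.integral_add_adjacent_intervals
      (hB_int 0 N) (hB_int N (N + 1))
    simp only [Int.cast_natCast] at h_step
    simp only [Pi.mul_apply, Nat.cast_zero] at hf_add hB_add
    rw [sum_range_succ, ih, ← hf_add, ← hB_add]
    push_cast
    linarith

lemma tendsto_sum_range_sub_integral
    (hf : ∀ t, 0 ≤ t → HasDerivAt f (f' t) t) (hf' : ∀ t, 0 ≤ t → HasDerivAt f' (f'' t) t)
    (hf'' : ContinuousOn f'' (Set.Ici 0)) (hf''_int : IntegrableOn f'' (Set.Ioi 0)) :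
    Tendsto
      (fun N : ℕ ↦ ∑ j ∈ range N, f j - (∫ t in (0 : ℝ)..N, f t) + (f N - f 0) / 2
        - (f' N - f' 0) / 12) atTop
      (𝓝 (-(1 / 2 * ∫ t in Set.Ioi (0 : ℝ), periodizedBernoulli 2 (t : UnitAddCircle) * f'' t))) :=
    by
  have h_tail := intervalIntegral_tendsto_integral_Ioi 0
    (integrable_periodizedBernoulli_two_mul hf''_int) tendsto_natCast_atTop_atTop
  refine (h_tail.const_mul (1 / 2)).neg.congr fun N ↦ ?_
  rw [sum_range_eq_integral_add_integral_periodizedBernoulli_two hf hf' hf'']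
  ring

end EulerMaclaurin

section RayRotation

variable {s : Set ℂ} {F P : ℂ → ℂ} {w w₁ w₂ : ℂ} {C K R : ℝ}

lemma mul_intervalIntegral_ray_eq_sub (hR : 0 ≤ R) (hw : ∀ t ∈ Set.Icc 0 R, t • w ∈ s)
    (hF : ContinuousOn F s) (hP : ∀ z ∈ s, HasDerivWithinAt P (F z) s z) :
    w * ∫ t in (0 : ℝ)..R, F (t • w) = P (R • w) - P 0 := by
  have h_deriv : ∀ t ∈ Set.Icc 0 R,
      HasDerivWithinAt (fun t : ℝ ↦ P (t • w)) (w * F (t • w)) (Set.Icc 0 R) t := by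
    intro t ht
    simpa [Function.comp_def] using
      (hP _ (hw t ht)).scomp t ((hasDerivWithinAt_id t _).smul_const w) hw
  have h_cont : ContinuousOn (fun t : ℝ ↦ w * F (t • w)) (Set.Icc 0 R) :=
    continuousOn_const.mul (hF.comp (by fun_prop) hw)
  rw [← intervalIntegral.integral_const_mul,
    intervalIntegral.integral_eq_sub_of_hasDerivAt_of_le hR
      (fun t ht ↦ (h_deriv t ht).continuousWithinAt)
      (fun t ht ↦ (h_deriv t (Set.Ioo_subset_Icc_self ht)).hasDerivAt (Icc_mem_nhds ht.1 ht.2))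
      (h_cont.intervalIntegrable_of_Icc hR), zero_smul]

lemma norm_ray_sub_ray_le (hs : Convex ℝ s) (hF : DifferentiableOn ℂ F s) (hR : 0 ≤ R)
    (hw₁ : ∀ t ∈ Set.Icc 0 R, t • w₁ ∈ s) (hw₂ : ∀ t ∈ Set.Icc 0 R, t • w₂ ∈ s)
    (hC : ∀ z ∈ segment ℝ (R • w₁) (R • w₂), ‖F z‖ ≤ C) :
    ‖w₂ * (∫ t in (0 : ℝ)..R, F (t • w₂)) - w₁ * ∫ t in (0 : ℝ)..R, F (t • w₁)‖
      ≤ C * ‖R • w₂ - R • w₁‖ := by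
  obtain ⟨P, hP⟩ := hs.exists_forall_hasDerivWithinAt hF
  have h_segment := hs.segment_subset (hw₁ R ⟨hR, le_rfl⟩) (hw₂ R ⟨hR, le_rfl⟩)
  rw [mul_intervalIntegral_ray_eq_sub hR hw₁ hF.continuousOn hP,
    mul_intervalIntegral_ray_eq_sub hR hw₂ hF.continuousOn hP, sub_sub_sub_cancel_right]
  exact (convex_segment _ _).norm_image_sub_le_of_norm_hasDerivWithin_le
    (fun z hz ↦ (hP z (h_segment hz)).mono h_segment) hC
    (left_mem_segment ℝ _ _) (right_mem_segment ℝ _ _)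

lemma integrableOn_ray (hF : ContinuousOn F s) (hF_le : ∀ z ∈ s, ‖F z‖ ≤ K / (1 + ‖z‖ ^ 2))
    (hw : ∀ t : ℝ, 0 ≤ t → t • w ∈ s) (hw₀ : w ≠ 0) :
    IntegrableOn (fun t : ℝ ↦ F (t • w)) (Set.Ioi 0) := by
  have h_bound : Integrable fun t : ℝ ↦ K * (1 + (t * ‖w‖) ^ 2)⁻¹ :=
    (integrable_inv_one_add_sq.comp_mul_right' (norm_ne_zero_iff.mpr hw₀)).const_mul K
  refine h_bound.integrableOn.mono' ?_ ?_
  · exact (hF.comp (by fun_prop) fun t ht ↦ hw t (le_of_lt ht)).aestronglyMeasurable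
      measurableSet_Ioi
  · filter_upwards [ae_restrict_mem measurableSet_Ioi] with t ht
    refine (hF_le _ (hw t (le_of_lt ht))).trans_eq ?_
    rw [norm_smul, mul_pow, mul_pow, norm_eq_abs, sq_abs, div_eq_mul_inv]

lemma exists_pos_forall_segment_le_norm {E : Type*} [NormedAddCommGroup E] [NormedSpace ℝ E]
    {x y : E} (h_zero : 0 ∉ segment ℝ x y) : ∃ δ > 0, ∀ z ∈ segment ℝ x y, δ ≤ ‖z‖ := by
  have h_closed : IsClosed (segment ℝ x y) := by
    rw [segment_eq_image_lineMap]
    exact (isCompact_Icc.image AffineMap.lineMap_continuous).isClosed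
  refine ⟨Metric.infDist 0 (segment ℝ x y),
    (h_closed.notMem_iff_infDist_pos ⟨x, left_mem_segment ℝ _ _⟩).mp h_zero, fun z hz ↦ ?_⟩
  simpa using Metric.infDist_le_dist_of_mem (x := 0) hz

lemma mul_integral_ray_eq_mul_integral_ray (hs : Convex ℝ s) (hF : DifferentiableOn ℂ F s)
    (hF_le : ∀ z ∈ s, ‖F z‖ ≤ K / (1 + ‖z‖ ^ 2)) (hw₁ : ∀ t : ℝ, 0 ≤ t → t • w₁ ∈ s)
    (hw₂ : ∀ t : ℝ, 0 ≤ t → t • w₂ ∈ s) (h_zero : 0 ∉ segment ℝ w₁ w₂) :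
    w₁ * (∫ t in Set.Ioi (0 : ℝ), F (t • w₁)) = w₂ * ∫ t in Set.Ioi (0 : ℝ), F (t • w₂) := by
  have h_tendsto {w : ℂ} (hw : ∀ t : ℝ, 0 ≤ t → t • w ∈ s) (hw₀ : w ≠ 0) :
      Tendsto (fun R : ℝ ↦ w * ∫ t in (0 : ℝ)..R, F (t • w)) atTop
        (𝓝 (w * ∫ t in Set.Ioi (0 : ℝ), F (t • w))) :=
    (intervalIntegral_tendsto_integral_Ioi 0 (integrableOn_ray hF.continuousOn hF_le hw hw₀)
      tendsto_id).const_mul w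
  have hw₁_ne : w₁ ≠ 0 := by rintro rfl; exact h_zero (left_mem_segment ℝ _ _)
  have hw₂_ne : w₂ ≠ 0 := by rintro rfl; exact h_zero (right_mem_segment ℝ _ _)
  have hK : 0 ≤ K := by simpa using (norm_nonneg _).trans (hF_le _ (hw₁ 0 le_rfl))
  obtain ⟨δ, hδ, hδ_le⟩ := exists_pos_forall_segment_le_norm h_zero
  -- the segment closing the contour at distance `R` contributes `O(R * R⁻²)`
  have h_bound : ∀ R > 0,
      ‖w₂ * (∫ t in (0 : ℝ)..R, F (t • w₂)) - w₁ * ∫ t in (0 : ℝ)..R, F (t • w₁)‖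
        ≤ K * ‖w₂ - w₁‖ / δ ^ 2 * R⁻¹ := by
    intro R hR
    refine (norm_ray_sub_ray_le (C := K / (R * δ) ^ 2) hs hF hR.le (fun t ht ↦ hw₁ t ht.1)
      (fun t ht ↦ hw₂ t ht.1) ?_).trans_eq ?_
    · intro z hz
      have hz_mem : z ∈ s := hs.segment_subset (hw₁ R hR.le) (hw₂ R hR.le) hz
      obtain ⟨a, b, ha, hb, hab, rfl⟩ := hz
      refine (hF_le _ hz_mem).trans ?_
      have h_norm := hδ_le _ ⟨a, b, ha, hb, hab, rfl⟩
      rw [smul_comm a, smul_comm b, ← smul_add, norm_smul, norm_of_nonneg hR.le]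
      have h_sq : (R * δ) ^ 2 ≤ (R * ‖a • w₁ + b • w₂‖) ^ 2 := by gcongr
      gcongr
      linarith
    · rw [← smul_sub, norm_smul, norm_of_nonneg hR.le]
      field_simp
  have h_lim : Tendsto (fun R : ℝ ↦ K * ‖w₂ - w₁‖ / δ ^ 2 * R⁻¹) atTop (𝓝 0) := by
    simpa using tendsto_inv_atTop_zero.const_mul (K * ‖w₂ - w₁‖ / δ ^ 2)
  have h_sub := (h_tendsto hw₂ hw₂_ne).sub (h_tendsto hw₁ hw₁_ne)
  exact (sub_eq_zero.mp (tendsto_nhds_unique h_sub (squeeze_zero_norm'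
    ((eventually_gt_atTop 0).mono h_bound) h_lim))).symm

end RayRotation

section ZetaKernel

/-- The function whose regularized sum over `t = 0, 1, 2, …` is the `n`-th difference of zeta
values (see `hasSum_zetaKernel_sub_one_add`). It is defined over any field because it is used both
on the half-line and, to rotate a contour, on the complex plane. -/
def zetaKernel {𝕜 : Type*} [Field 𝕜] (n : ℕ) (t : 𝕜) : 𝕜 := (1 - (t + 1)⁻¹) ^ n

/-- The derivative of `zetaKernel`. -/
def zetaKernelDeriv {𝕜 : Type*} [Field 𝕜] (n : ℕ) (t : 𝕜) : 𝕜 :=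
  n * (1 - (t + 1)⁻¹) ^ (n - 1) * (t + 1)⁻¹ ^ 2

/-- The second derivative of `zetaKernel`; where the subtractions in the exponents truncate, the
factors `n` and `n - 1` vanish. -/
def zetaKernelDeriv₂ {𝕜 : Type*} [Field 𝕜] (n : ℕ) (t : 𝕜) : 𝕜 :=
  n * (t + 1)⁻¹ ^ 3 * ((n - 1 : ℕ) * (1 - (t + 1)⁻¹) ^ (n - 2) * (t + 1)⁻¹
    - 2 * (1 - (t + 1)⁻¹) ^ (n - 1))

section Deriv

variable {𝕜 : Type*} [NontriviallyNormedField 𝕜] {t : 𝕜}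

lemma hasDerivAt_inv_add_one (ht : t + 1 ≠ 0) :
    HasDerivAt (fun t : 𝕜 ↦ (t + 1)⁻¹) (-(t + 1)⁻¹ ^ 2) t := by
  simpa [neg_div] using ((hasDerivAt_id t).add_const 1).fun_inv ht

lemma hasDerivAt_one_sub_inv_add_one_pow (n : ℕ) (ht : t + 1 ≠ 0) :
    HasDerivAt (fun t : 𝕜 ↦ (1 - (t + 1)⁻¹) ^ n)
      (n * (1 - (t + 1)⁻¹) ^ (n - 1) * (t + 1)⁻¹ ^ 2) t := by
  simpa using ((hasDerivAt_inv_add_one ht).const_sub 1).fun_pow n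

lemma hasDerivAt_zetaKernel (n : ℕ) (ht : t + 1 ≠ 0) :
    HasDerivAt (zetaKernel n) (zetaKernelDeriv n t) t :=
  hasDerivAt_one_sub_inv_add_one_pow n ht

lemma hasDerivAt_zetaKernelDeriv (n : ℕ) (ht : t + 1 ≠ 0) :
    HasDerivAt (zetaKernelDeriv n) (zetaKernelDeriv₂ n t) t := by
  refine (((hasDerivAt_one_sub_inv_add_one_pow (n - 1) ht).const_mul (n : 𝕜)).mul
    ((hasDerivAt_inv_add_one ht).fun_pow 2)).congr_deriv ?_
  rw [zetaKernelDeriv₂, Nat.sub_sub]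
  push_cast
  ring

lemma differentiableAt_zetaKernelDeriv₂ (n : ℕ) (ht : t + 1 ≠ 0) :
    DifferentiableAt 𝕜 (zetaKernelDeriv₂ n) t := by
  unfold zetaKernelDeriv₂
  fun_prop (disch := exact ht)

end Deriv

variable {n : ℕ} {x : ℝ}

lemma sum_Icc_two_neg_one_pow_mul_choose_mul_pow (hn : n ≠ 0) (x : ℝ) :
    ∑ l ∈ Icc 2 n, (-1) ^ l * (n.choose l : ℝ) * x ^ l = (1 - x) ^ n - 1 + n * x := by
  have h_binomial : (1 - x) ^ n = ∑ l ∈ range (n + 1), (-1) ^ l * (n.choose l : ℝ) * x ^ l := by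
    rw [sub_eq_neg_add, add_pow]
    refine sum_congr rfl fun l _ ↦ ?_
    rw [neg_pow, one_pow]
    ring
  rw [← Ico_add_one_right_eq_Icc, sum_Ico_eq_sub _ (by lia), h_binomial]
  simp only [sum_range_succ, sum_range_zero, Nat.choose_zero_right, Nat.choose_one_right]
  push_cast
  ring

lemma hasSum_zetaKernel_sub_one_add (hn : n ≠ 0) :
    HasSum (fun j : ℕ ↦ zetaKernel n (j : ℝ) - 1 + n * ((j : ℝ) + 1)⁻¹)
      (∑ l ∈ Icc 2 n, (-1 : ℝ) ^ l * (n.choose l : ℝ) * ∑' j : ℕ, 1 / ((j : ℝ) + 1) ^ l) := by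
  have h_summable : ∀ l ∈ Icc 2 n, Summable fun j : ℕ ↦ 1 / ((j : ℝ) + 1) ^ l := by
    intro l hl
    have h_shift := (summable_nat_add_iff 1).mpr
      (Real.summable_one_div_nat_pow.mpr (mem_Icc.mp hl).1)
    simpa only [Nat.cast_add_one] using h_shift
  refine (hasSum_sum fun l hl ↦ (h_summable l hl).hasSum.mul_left _).congr_fun fun j ↦ ?_
  rw [zetaKernel, ← sum_Icc_two_neg_one_pow_mul_choose_mul_pow hn]
  simp only [one_div, inv_pow]

lemma hasDerivAt_zetaKernel_primitive (n : ℕ) (hx : x + 1 ≠ 0) :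
    HasDerivAt (fun x : ℝ ↦ (x + 1) * (1 - (x + 1)⁻¹) ^ (n + 1)
      - (n + 1) * (log (x + 1) - ∑ j ∈ range n, (1 - (x + 1)⁻¹) ^ (j + 1) / (j + 1)))
      (zetaKernel (n + 1) x) x := by
  have h_log : HasDerivAt (fun x : ℝ ↦ log (x + 1)) (x + 1)⁻¹ x := by
    simpa using ((hasDerivAt_id x).add_const 1).log hx
  have h_term (j : ℕ) : HasDerivAt (fun x : ℝ ↦ (1 - (x + 1)⁻¹) ^ (j + 1) / (j + 1))
      ((x + 1)⁻¹ ^ 2 * (1 - (x + 1)⁻¹) ^ j) x := by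
    refine ((hasDerivAt_one_sub_inv_add_one_pow (j + 1) hx).div_const _).congr_deriv ?_
    push_cast [Nat.add_sub_cancel]
    field_simp
  have h_sum := HasDerivAt.fun_sum fun j (_ : j ∈ range n) ↦ h_term j
  have h_pow := ((hasDerivAt_id x).add_const 1).mul
    (hasDerivAt_one_sub_inv_add_one_pow (n + 1) hx)
  refine (h_pow.sub ((h_log.sub h_sum).const_mul (n + 1 : ℝ))).congr_deriv ?_
  have h_geom := mul_neg_geom_sum (1 - (x + 1)⁻¹) n
  have h_inv : (x + 1) * (x + 1)⁻¹ = 1 := mul_inv_cancel₀ hx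
  rw [← mul_sum, zetaKernel]
  push_cast [Nat.add_sub_cancel, id]
  linear_combination (n + 1) * (1 - (x + 1)⁻¹) ^ n * (x + 1)⁻¹ * h_inv
    + (n + 1) * (x + 1)⁻¹ * h_geom

lemma integral_zetaKernel (n : ℕ) (hx : 0 ≤ x) :
    ∫ t in 0..x, zetaKernel (n + 1) t = x + 1 - ∑ i ∈ range (n + 1), (1 - (x + 1)⁻¹) ^ i
      - (n + 1) * (log (x + 1) - ∑ j ∈ range n, (1 - (x + 1)⁻¹) ^ (j + 1) / (j + 1)) := by
  have h_ne : ∀ t ∈ Set.uIcc 0 x, t + 1 ≠ 0 := fun t ht ↦ by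
    rw [Set.uIcc_of_le hx] at ht
    linarith [ht.1]
  have h_cont : ContinuousOn (zetaKernel (n + 1)) (Set.uIcc 0 x) := fun t ht ↦
    (hasDerivAt_zetaKernel (n + 1) (h_ne t ht)).continuousAt.continuousWithinAt
  have h_geom := mul_neg_geom_sum (1 - (x + 1)⁻¹) (n + 1)
  have h_inv : (x + 1) * (x + 1)⁻¹ = 1 := mul_inv_cancel₀ (by positivity)
  rw [intervalIntegral.integral_eq_sub_of_hasDerivAt
    (fun t ht ↦ hasDerivAt_zetaKernel_primitive n (h_ne t ht)) h_cont.intervalIntegrable]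
  simp only [zero_add, inv_one, sub_self, log_one, ne_eq, Nat.add_eq_zero_iff, one_ne_zero,
    and_false, not_false_eq_true, zero_pow, zero_div, sum_const_zero, mul_zero, sub_zero]
  linear_combination (x + 1) * h_geom - (∑ i ∈ range (n + 1), (1 - (x + 1)⁻¹) ^ i) * h_inv

lemma tendsto_one_sub_inv_add_one : Tendsto (fun x : ℝ ↦ 1 - (x + 1)⁻¹) atTop (𝓝 1) := by
  have h_inv : Tendsto (fun x : ℝ ↦ (x + 1)⁻¹) atTop (𝓝 0) :=
    tendsto_inv_atTop_zero.comp (tendsto_atTop_add_const_right _ 1 tendsto_id)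
  simpa using h_inv.const_sub 1

lemma tendsto_zetaKernel (n : ℕ) : Tendsto (fun t : ℝ ↦ zetaKernel n t) atTop (𝓝 1) := by
  simpa [zetaKernel] using tendsto_one_sub_inv_add_one.pow n

lemma tendsto_zetaKernelDeriv (n : ℕ) : Tendsto (fun t : ℝ ↦ zetaKernelDeriv n t) atTop (𝓝 0) := by
  have h_u := tendsto_one_sub_inv_add_one
  simpa [zetaKernelDeriv] using
    ((h_u.pow (n - 1)).const_mul (n : ℝ)).mul ((h_u.const_sub 1).pow 2)

lemma tendsto_integral_zetaKernel_sub_add_log (n : ℕ) :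
    Tendsto (fun x : ℝ ↦ (∫ t in 0..x, zetaKernel (n + 1) t) - x + (n + 1) * log (x + 1)) atTop
      (𝓝 (1 - (n + 1) + (n + 1) * harmonic n)) := by
  have h_u := tendsto_one_sub_inv_add_one
  have h_lim := ((tendsto_finsetSum (range (n + 1)) fun i _ ↦ h_u.pow i).const_sub 1).add
    ((tendsto_finsetSum (range n) fun j _ ↦
      (h_u.pow (j + 1)).div_const ((j : ℝ) + 1)).const_mul ((n : ℝ) + 1))
  refine Tendsto.congr' ?_ (h_lim.trans_eq ?_)
  · filter_upwards [eventually_ge_atTop 0] with x hx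
    rw [integral_zetaKernel n hx]
    ring
  · simp [harmonic]

end ZetaKernel

section MainIdentity

lemma harm_eq_harmonic (n : ℕ) : harm n = harmonic n := by
  simp [harm, harmonic_eq_sum_Icc]

variable {n : ℕ}

lemma tendsto_sum_zetaKernel_sub_integral (hn : n ≠ 0) :
    Tendsto (fun N : ℕ ↦ ∑ j ∈ range N, zetaKernel n (j : ℝ) - ∫ t in (0 : ℝ)..N, zetaKernel n t)
      atTop (𝓝 ((∑ l ∈ Icc 2 n, (-1 : ℝ) ^ l * (n.choose l : ℝ) * ∑' j : ℕ, 1 / ((j : ℝ) + 1) ^ l)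
        - n * (eulerMascheroniConstant + harm (n - 1) - 1) - 1)) := by
  obtain ⟨m, rfl⟩ := Nat.exists_eq_succ_of_ne_zero hn
  have h_sum := (hasSum_zetaKernel_sub_one_add hn).tendsto_sum_nat
  have h_integral := (tendsto_integral_zetaKernel_sub_add_log m).comp
    tendsto_natCast_atTop_atTop
  have h_harmonic := tendsto_harmonic_sub_log_add_one.const_mul ((m : ℝ) + 1)
  refine (((h_sum.sub h_integral).sub h_harmonic).congr fun N ↦ ?_).trans_eq ?_
  · simp only [Function.comp_apply, sum_add_distrib, sum_sub_distrib, ← mul_sum, harmonic]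
    push_cast
    simp only [sum_const, card_range, nsmul_eq_mul, mul_one]
    ring
  · rw [harm_eq_harmonic, Nat.succ_eq_add_one, Nat.add_sub_cancel]
    push_cast
    ring_nf

lemma sum_Icc_choose_mul_zeta_eq (hn : 2 ≤ n)
    (h_int : IntegrableOn (fun t : ℝ ↦ zetaKernelDeriv₂ n t) (Set.Ioi 0)) :
    ∑ l ∈ Icc 2 n, (-1 : ℝ) ^ l * (n.choose l : ℝ) * ∑' j : ℕ, 1 / ((j : ℝ) + 1) ^ l
      = 1 / 2 - n * (1 - eulerMascheroniConstant - harm (n - 1))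
        - 1 / 2 * ∫ t in Set.Ioi (0 : ℝ),
          periodizedBernoulli 2 (t : UnitAddCircle) * zetaKernelDeriv₂ n t := by
  have h_ne {t : ℝ} (ht : 0 ≤ t) : t + 1 ≠ 0 := by positivity
  have h_eulerMaclaurin := tendsto_sum_range_sub_integral
    (fun t ht ↦ hasDerivAt_zetaKernel n (h_ne ht))
    (fun t ht ↦ hasDerivAt_zetaKernelDeriv n (h_ne ht))
    (fun t ht ↦ (differentiableAt_zetaKernelDeriv₂ n (h_ne ht)).continuousAt.continuousWithinAt)
    h_int
  have h_zero : zetaKernel n (0 : ℝ) = 0 := by simp [zetaKernel, show n ≠ 0 by lia]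
  have h_deriv_zero : zetaKernelDeriv n (0 : ℝ) = 0 := by
    simp [zetaKernelDeriv, show n - 1 ≠ 0 by lia]
  have h_endpoint := ((tendsto_zetaKernel n).comp tendsto_natCast_atTop_atTop).div_const 2
  have h_deriv_endpoint :=
    ((tendsto_zetaKernelDeriv n).comp tendsto_natCast_atTop_atTop).div_const 12
  have h_limit := ((tendsto_sum_zetaKernel_sub_integral (n := n) (by lia)).add h_endpoint).sub
    h_deriv_endpoint
  simp only [h_zero, h_deriv_zero, sub_zero] at h_eulerMaclaurin
  linarith [tendsto_nhds_unique h_limit h_eulerMaclaurin]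

end MainIdentity

section Laplace

variable {a c q δ : ℝ}

lemma exp_neg_mul_sub_sq_div_le (hc : 0 ≤ c) (hq : 0 < q) :
    exp (-(c * (q - a) ^ 2 / q)) ≤ exp (-(c / (2 * a)) * (q - a) ^ 2) + exp (-(c / 4) * q) := by
  rcases le_total q (2 * a) with hqa | hqa
  · refine le_add_of_le_of_nonneg (exp_le_exp.mpr ?_) (exp_nonneg _)
    rw [neg_mul, neg_le_neg_iff, div_mul_eq_mul_div]
    gcongr
  · refine le_add_of_nonneg_of_le (exp_nonneg _) (exp_le_exp.mpr ?_)
    have h_sq : (q / 2) ^ 2 ≤ (q - a) ^ 2 := by gcongr; linarith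
    rw [neg_mul, neg_le_neg_iff, le_div_iff₀ hq]
    nlinarith

lemma exp_neg_mul_add_sub_sq_div_le (hc : 0 ≤ c) (hq : 0 < q) (hδ : 0 ≤ δ) :
    exp (-(c * (q + δ - a) ^ 2 / (q + δ)))
      ≤ exp (-(c / (2 * a)) * (q + (δ - a)) ^ 2) + exp (-(c / 4) * q) := by
  refine (exp_neg_mul_sub_sq_div_le hc (by positivity)).trans ?_
  rw [add_sub_assoc]
  gcongr _ + exp ?_
  exact mul_le_mul_of_nonpos_left (by linarith) (by linarith)

lemma integrable_exp_neg_mul_add_sub_sq (hc : 0 < c) (ha : 0 < a) (δ : ℝ) :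
    Integrable fun q : ℝ ↦ exp (-(c / (2 * a)) * (q + (δ - a)) ^ 2) :=
  (integrable_exp_neg_mul_sq (by positivity)).comp_add_right (δ - a)

lemma integrableOn_exp_neg_mul_add_sub_sq_div (hc : 0 < c) (ha : 0 < a) (hδ : 0 ≤ δ) :
    IntegrableOn (fun q : ℝ ↦ exp (-(c * (q + δ - a) ^ 2 / (q + δ)))) (Set.Ioi 0) := by
  refine ((integrable_exp_neg_mul_add_sub_sq hc ha δ).integrableOn.add
    (integrableOn_exp_mul_Ioi (neg_neg_of_pos (div_pos hc four_pos)) 0)).mono'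
    (by fun_prop : Measurable fun q ↦ _).aestronglyMeasurable ?_
  filter_upwards [ae_restrict_mem measurableSet_Ioi] with q hq
  rw [norm_of_nonneg (exp_nonneg _)]
  exact exp_neg_mul_add_sub_sq_div_le hc.le hq hδ

lemma integral_exp_neg_mul_add_sub_sq_div_le (hc : 0 < c) (ha : 0 < a) (hδ : 0 ≤ δ) :
    ∫ q in Set.Ioi 0, exp (-(c * (q + δ - a) ^ 2 / (q + δ))) ≤ √(2 * π * a / c) + 4 / c := by
  have h_gauss := integrable_exp_neg_mul_add_sub_sq hc ha δ
  have h_tail := integrableOn_exp_mul_Ioi (neg_neg_of_pos (div_pos hc four_pos)) 0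
  calc ∫ q in Set.Ioi 0, exp (-(c * (q + δ - a) ^ 2 / (q + δ)))
      ≤ ∫ q in Set.Ioi 0, (exp (-(c / (2 * a)) * (q + (δ - a)) ^ 2) + exp (-(c / 4) * q)) :=
        setIntegral_mono_on (integrableOn_exp_neg_mul_add_sub_sq_div hc ha hδ)
          (h_gauss.integrableOn.add h_tail) measurableSet_Ioi
          fun q hq ↦ exp_neg_mul_add_sub_sq_div_le hc.le hq hδ
    _ = (∫ q in Set.Ioi 0, exp (-(c / (2 * a)) * (q + (δ - a)) ^ 2))
          + ∫ q in Set.Ioi 0, exp (-(c / 4) * q) := integral_add h_gauss.integrableOn h_tail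
    _ ≤ (∫ q, exp (-(c / (2 * a)) * (q + (δ - a)) ^ 2))
          + ∫ q in Set.Ioi 0, exp (-(c / 4) * q) := by
        gcongr ?_ + _
        exact setIntegral_le_integral h_gauss (.of_forall fun q ↦ exp_nonneg _)
    _ = √(2 * π * a / c) + 4 / c := by
        rw [integral_add_right_eq_self fun q ↦ exp (-(c / (2 * a)) * q ^ 2), integral_gaussian,
          integral_exp_mul_Ioi (neg_neg_of_pos (div_pos hc four_pos))]
        congr 1
        · congr 1
          field_simp
        · simp

end Laplace

section Estimates

variable {n : ℕ} {z w : ℂ} {b : ℝ}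

lemma one_add_norm_sq_le_norm_add_one_sq (hz : 0 ≤ z.re) : 1 + ‖z‖ ^ 2 ≤ ‖z + 1‖ ^ 2 := by
  simp only [Complex.sq_norm, Complex.normSq_apply, Complex.add_re, Complex.one_re,
    Complex.add_im, Complex.one_im]
  linarith

lemma add_one_ne_zero_of_re_nonneg (hz : 0 ≤ z.re) : z + 1 ≠ 0 := by
  rintro h
  linarith [congrArg Complex.re h, Complex.add_re z 1, Complex.one_re, Complex.zero_re]

lemma one_sub_inv_add_one_eq_div (hz : z + 1 ≠ 0) : 1 - (z + 1)⁻¹ = z / (z + 1) := by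
  field_simp
  ring

lemma norm_one_sub_inv_add_one_le_one (hz : 0 ≤ z.re) : ‖1 - (z + 1)⁻¹‖ ≤ 1 := by
  rw [one_sub_inv_add_one_eq_div (add_one_ne_zero_of_re_nonneg hz), norm_div]
  refine div_le_one_of_le₀ (le_of_sq_le_sq ?_ (norm_nonneg _)) (norm_nonneg _)
  linarith [one_add_norm_sq_le_norm_add_one_sq hz]

lemma norm_zetaKernelDeriv₂_le (n : ℕ) (hz : 0 ≤ z.re) :
    ‖zetaKernelDeriv₂ n z‖
      ≤ n * (n * ‖(z + 1)⁻¹‖ + 2) * ‖(z + 1)⁻¹‖ ^ 3 * ‖1 - (z + 1)⁻¹‖ ^ (n - 2) := by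
  have h_pow : ‖1 - (z + 1)⁻¹‖ ^ (n - 1) ≤ ‖1 - (z + 1)⁻¹‖ ^ (n - 2) :=
    pow_le_pow_of_le_one (norm_nonneg _) (norm_one_sub_inv_add_one_le_one hz) (by lia)
  have h_cast : ((n - 1 : ℕ) : ℝ) ≤ n := mod_cast n.sub_le 1
  calc ‖zetaKernelDeriv₂ n z‖
      ≤ n * ‖(z + 1)⁻¹‖ ^ 3 * ((n - 1 : ℕ) * ‖1 - (z + 1)⁻¹‖ ^ (n - 2) * ‖(z + 1)⁻¹‖
          + 2 * ‖1 - (z + 1)⁻¹‖ ^ (n - 1)) := by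
        rw [zetaKernelDeriv₂, norm_mul, norm_mul, norm_pow, Complex.norm_natCast]
        gcongr
        refine (norm_sub_le _ _).trans_eq ?_
        simp only [norm_mul, norm_pow, Complex.norm_natCast, Complex.norm_two]
    _ ≤ n * ‖(z + 1)⁻¹‖ ^ 3 * (n * ‖1 - (z + 1)⁻¹‖ ^ (n - 2) * ‖(z + 1)⁻¹‖
          + 2 * ‖1 - (z + 1)⁻¹‖ ^ (n - 2)) := by gcongr
    _ = n * (n * ‖(z + 1)⁻¹‖ + 2) * ‖(z + 1)⁻¹‖ ^ 3 * ‖1 - (z + 1)⁻¹‖ ^ (n - 2) := by ring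

lemma norm_zetaKernelDeriv₂_le_div (n : ℕ) (hz : 0 ≤ z.re) :
    ‖zetaKernelDeriv₂ n z‖ ≤ n * (n + 2) / (1 + ‖z‖ ^ 2) := by
  have h_sq : ‖(z + 1)⁻¹‖ ^ 2 ≤ (1 + ‖z‖ ^ 2)⁻¹ := by
    rw [norm_inv, inv_pow]
    gcongr
    exact one_add_norm_sq_le_norm_add_one_sq hz
  have h_le_one : ‖(z + 1)⁻¹‖ ≤ 1 := by
    rw [← sq_le_one_iff₀ (norm_nonneg _)]
    exact h_sq.trans (inv_le_one_of_one_le₀ (by linarith [sq_nonneg ‖z‖]))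
  calc ‖zetaKernelDeriv₂ n z‖
      ≤ n * (n * ‖(z + 1)⁻¹‖ + 2) * ‖(z + 1)⁻¹‖ ^ 3 * ‖1 - (z + 1)⁻¹‖ ^ (n - 2) :=
        norm_zetaKernelDeriv₂_le n hz
    _ ≤ n * (n * 1 + 2) * ‖(z + 1)⁻¹‖ ^ 2 * 1 := by
        have h_pow := pow_le_pow_of_le_one (norm_nonneg _) h_le_one (show 2 ≤ 3 by norm_num)
        gcongr
        exact pow_le_one₀ (norm_nonneg _) (norm_one_sub_inv_add_one_le_one hz)
    _ ≤ n * (n + 2) / (1 + ‖z‖ ^ 2) := by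
        rw [mul_one, mul_one, div_eq_mul_inv]
        gcongr

lemma ofReal_zetaKernelDeriv₂ (n : ℕ) (t : ℝ) :
    ((zetaKernelDeriv₂ n t : ℝ) : ℂ) = zetaKernelDeriv₂ n (t : ℂ) := by
  simp [zetaKernelDeriv₂]

lemma integrableOn_zetaKernelDeriv₂ (n : ℕ) :
    IntegrableOn (fun t : ℝ ↦ zetaKernelDeriv₂ n t) (Set.Ioi 0) := by
  have h_int : IntegrableOn (fun t : ℝ ↦ zetaKernelDeriv₂ n (t • (1 : ℂ))) (Set.Ioi 0) :=
    integrableOn_ray (s := {z | 0 ≤ z.re}) (fun z hz ↦ (differentiableAt_zetaKernelDeriv₂ n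
      (add_one_ne_zero_of_re_nonneg hz)).continuousAt.continuousWithinAt)
      (fun z ↦ norm_zetaKernelDeriv₂_le_div n) (by simp) one_ne_zero
  simpa [IntegrableOn, ← ofReal_zetaKernelDeriv₂] using h_int.re

lemma norm_exp_mul_mul_I (b : ℝ) (z : ℂ) :
    ‖Complex.exp (b * z * Complex.I)‖ = exp (-(b * z.im)) := by
  simp [Complex.norm_exp]

lemma norm_zetaKernelDeriv₂_mul_exp_le_div (n : ℕ) (hb : 0 ≤ b) (hz_re : 0 ≤ z.re)
    (hz_im : 0 ≤ z.im) :
    ‖zetaKernelDeriv₂ n z * Complex.exp (b * z * Complex.I)‖ ≤ n * (n + 2) / (1 + ‖z‖ ^ 2) := by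
  rw [norm_mul, norm_exp_mul_mul_I]
  refine (mul_le_of_le_one_right (norm_nonneg _) (exp_le_one_iff.mpr ?_)).trans
    (norm_zetaKernelDeriv₂_le_div n hz_re)
  exact neg_nonpos.mpr (mul_nonneg hb hz_im)

lemma re_zetaKernelDeriv₂_mul_exp (n : ℕ) (b t : ℝ) :
    (zetaKernelDeriv₂ n (t : ℂ) * Complex.exp (b * t * Complex.I)).re
      = cos (b * t) * zetaKernelDeriv₂ n t := by
  rw [← ofReal_zetaKernelDeriv₂, Complex.re_ofReal_mul, ← Complex.ofReal_mul,
    Complex.exp_ofReal_mul_I_re, mul_comm]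

lemma abs_integral_cos_mul_zetaKernelDeriv₂_le (hb : 0 ≤ b) (hw_re : 0 < w.re)
    (hw_im : 0 ≤ w.im) :
    |∫ t in Set.Ioi 0, cos (b * t) * zetaKernelDeriv₂ n t|
      ≤ ‖w‖ * ∫ t in Set.Ioi (0 : ℝ), ‖zetaKernelDeriv₂ n (t • w)‖ * exp (-(b * (t * w.im))) := by
  set F : ℂ → ℂ := fun z ↦ zetaKernelDeriv₂ n z * Complex.exp (b * z * Complex.I) with hF
  set s : Set ℂ := {z | 0 ≤ z.re} ∩ {z | 0 ≤ z.im} with hs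
  have hs_convex : Convex ℝ s := (convex_halfSpace_re_ge 0).inter (convex_halfSpace_im_ge 0)
  have h_diff : DifferentiableOn ℂ F s := fun z hz ↦
    ((differentiableAt_zetaKernelDeriv₂ n (add_one_ne_zero_of_re_nonneg hz.1)).mul
      (by fun_prop)).differentiableWithinAt
  have h_bound : ∀ z ∈ s, ‖F z‖ ≤ n * (n + 2) / (1 + ‖z‖ ^ 2) := fun z hz ↦
    norm_zetaKernelDeriv₂_mul_exp_le_div n hb hz.1 hz.2
  have h_one : ∀ t : ℝ, 0 ≤ t → t • (1 : ℂ) ∈ s := fun t ht ↦ by simpa [hs] using ht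
  have hw : ∀ t : ℝ, 0 ≤ t → t • w ∈ s := fun t ht ↦
    ⟨by simpa using mul_nonneg ht hw_re.le, by simpa using mul_nonneg ht hw_im⟩
  have h_zero : (0 : ℂ) ∉ segment ℝ 1 w := fun h ↦
    lt_irrefl (0 : ℝ) ((convex_halfSpace_re_gt 0).segment_subset (by simp) hw_re h)
  have h_int := integrableOn_ray h_diff.continuousOn h_bound h_one one_ne_zero
  have h_rotate := mul_integral_ray_eq_mul_integral_ray hs_convex h_diff h_bound h_one hw h_zero
  calc |∫ t in Set.Ioi 0, cos (b * t) * zetaKernelDeriv₂ n t|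
      = |(∫ t in Set.Ioi (0 : ℝ), F (t • 1)).re| := by
        rw [← RCLike.re_eq_complex_re, ← integral_re h_int]
        simp only [hF, Complex.real_smul, mul_one, RCLike.re_eq_complex_re,
          re_zetaKernelDeriv₂_mul_exp]
    _ ≤ ‖∫ t in Set.Ioi (0 : ℝ), F (t • 1)‖ := Complex.abs_re_le_norm _
    _ = ‖w‖ * ‖∫ t in Set.Ioi (0 : ℝ), F (t • w)‖ := by
        rw [← one_mul (∫ t in Set.Ioi (0 : ℝ), F (t • 1)), h_rotate, norm_mul]
    _ ≤ ‖w‖ * ∫ t in Set.Ioi (0 : ℝ), ‖F (t • w)‖ := by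
        gcongr
        exact norm_integral_le_integral_norm _
    _ = _ := by
        simp only [hF, norm_mul, norm_exp_mul_mul_I, Complex.smul_im, smul_eq_mul]

end Estimates

section DiagonalRay

variable {a c ρ q : ℝ}

lemma norm_diagonal_sq (ρ : ℝ) : ‖ρ • ((1 + Complex.I) / 2)‖ ^ 2 = ρ ^ 2 / 2 := by
  rw [Complex.sq_norm, Complex.normSq_apply]
  simp only [Complex.real_smul, Complex.mul_re, Complex.mul_im, Complex.div_ofNat_re,
    Complex.div_ofNat_im, Complex.add_re, Complex.add_im, Complex.ofReal_re, Complex.ofReal_im,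
    Complex.one_re, Complex.one_im, Complex.I_re, Complex.I_im]
  ring

lemma norm_diagonal_add_one_sq (ρ : ℝ) :
    ‖ρ • ((1 + Complex.I) / 2) + 1‖ ^ 2 = (ρ ^ 2 + 2 * ρ + 2) / 2 := by
  rw [Complex.sq_norm, Complex.normSq_apply]
  simp only [Complex.real_smul, Complex.mul_re, Complex.mul_im, Complex.div_ofNat_re,
    Complex.div_ofNat_im, Complex.add_re, Complex.add_im, Complex.ofReal_re, Complex.ofReal_im,
    Complex.one_re, Complex.one_im, Complex.I_re, Complex.I_im]
  ring

lemma diagonal_re_nonneg (hρ : 0 ≤ ρ) : 0 ≤ (ρ • ((1 + Complex.I) / 2)).re := by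
  simpa using hρ

lemma norm_inv_diagonal_add_one_le (hρ : 0 ≤ ρ) :
    ‖(ρ • ((1 + Complex.I) / 2) + 1)⁻¹‖ ≤ 2 / (ρ + 1) := by
  rw [norm_inv, ← inv_div (ρ + 1) 2]
  refine inv_anti₀ (by positivity) (le_of_sq_le_sq ?_ (norm_nonneg _))
  rw [norm_diagonal_add_one_sq]
  nlinarith

lemma div_add_two_le_exp (hρ : 0 < ρ) : ρ / (ρ + 2) ≤ exp (-(2 / (ρ + 1))) := by
  have h_log := le_log_one_add_of_nonneg (show 0 ≤ 2 / ρ by positivity)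
  have h_arg : 2 * (2 / ρ) / (2 / ρ + 2) = 2 / (ρ + 1) := by
    field_simp
    ring
  rw [h_arg, le_log_iff_exp_le (by positivity)] at h_log
  rw [exp_neg]
  refine (inv_anti₀ (exp_pos _) h_log).trans_eq' ?_
  field_simp

lemma norm_one_sub_inv_diagonal_add_one_le (hρ : 0 < ρ) :
    ‖1 - (ρ • ((1 + Complex.I) / 2) + 1)⁻¹‖ ≤ exp (-(1 / (ρ + 1))) := by
  refine le_of_sq_le_sq ?_ (exp_nonneg _)
  rw [one_sub_inv_add_one_eq_div (add_one_ne_zero_of_re_nonneg (diagonal_re_nonneg hρ.le)),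
    norm_div, div_pow, norm_diagonal_sq, norm_diagonal_add_one_sq]
  calc ρ ^ 2 / 2 / ((ρ ^ 2 + 2 * ρ + 2) / 2) ≤ ρ / (ρ + 2) := by
        rw [div_div_div_cancel_right₀ two_ne_zero, div_le_div_iff₀ (by positivity) (by positivity)]
        nlinarith
    _ ≤ exp (-(2 / (ρ + 1))) := div_add_two_le_exp hρ
    _ = exp (-(1 / (ρ + 1))) ^ 2 := by
        rw [← exp_nat_mul]
        push_cast
        ring_nf

lemma norm_zetaKernelDeriv₂_diagonal_le (n : ℕ) (hρ : 0 < ρ) :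
    ‖zetaKernelDeriv₂ n (ρ • ((1 + Complex.I) / 2))‖
      ≤ 16 * exp 2 * ((n / (ρ + 1) ^ 2) ^ 2 + n / (ρ + 1) ^ 3) * exp (-(n / (ρ + 1))) := by
  have h_pow : ‖1 - (ρ • ((1 + Complex.I) / 2) + 1)⁻¹‖ ^ (n - 2)
      ≤ exp 2 * exp (-(n / (ρ + 1))) := by
    refine (pow_le_pow_left₀ (norm_nonneg _) (norm_one_sub_inv_diagonal_add_one_le hρ) _).trans ?_
    rw [← exp_nat_mul, ← exp_add]
    have h_sub : (n : ℝ) ≤ (n - 2 : ℕ) + 2 := mod_cast (by lia : n ≤ n - 2 + 2)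
    have h_inv : 1 / (ρ + 1) ≤ 1 := (div_le_one (by positivity)).mpr (by linarith)
    have h_mul : (n : ℝ) * (1 / (ρ + 1)) ≤ ((n - 2 : ℕ) + 2) * (1 / (ρ + 1)) := by gcongr
    rw [exp_le_exp, div_eq_mul_one_div (n : ℝ)]
    linarith
  calc ‖zetaKernelDeriv₂ n (ρ • ((1 + Complex.I) / 2))‖
      ≤ n * (n * (2 / (ρ + 1)) + 2) * (2 / (ρ + 1)) ^ 3 * (exp 2 * exp (-(n / (ρ + 1)))) := by
        refine (norm_zetaKernelDeriv₂_le n (diagonal_re_nonneg hρ.le)).trans ?_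
        have h_inv := norm_inv_diagonal_add_one_le hρ.le
        gcongr
    _ = _ := by
        field_simp
        ring

lemma sq_le_two_mul_exp_sub_one_sq (t : ℝ) : t ^ 2 ≤ 2 * exp ((t - 1) ^ 2) := by
  nlinarith [add_one_le_exp ((t - 1) ^ 2), sq_nonneg (t - 2)]

lemma pow_four_le_eight_mul_exp_sub_one_sq (t : ℝ) : t ^ 4 ≤ 8 * exp ((t - 1) ^ 2) := by
  nlinarith [quadratic_le_exp_of_nonneg (sq_nonneg (t - 1)), sq_nonneg (t - 2),
    sq_nonneg (t * (t - 2))]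

lemma add_le_mul_exp_mul_sub_sq_div (hc : 2 ≤ c) (hq : 1 ≤ q) (a : ℝ) :
    (c * a ^ 2 / q ^ 2) ^ 2 + c * a ^ 2 / q ^ 3
      ≤ (8 * c ^ 2 + 2 * c) * exp (c / 2 * (q - a) ^ 2 / q) := by
  have h_exponent : (a / q - 1) ^ 2 ≤ c / 2 * (q - a) ^ 2 / q := by
    calc (a / q - 1) ^ 2 = 1 * (q - a) ^ 2 / q ^ 2 := by
          field_simp
          ring
      _ ≤ c / 2 * (q - a) ^ 2 / q := by
          gcongr
          · linarith
          · exact le_self_pow₀ hq two_ne_zero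
  calc (c * a ^ 2 / q ^ 2) ^ 2 + c * a ^ 2 / q ^ 3
      ≤ (c * a ^ 2 / q ^ 2) ^ 2 + c * a ^ 2 / q ^ 2 := by gcongr; norm_num
    _ = c ^ 2 * (a / q) ^ 4 + c * (a / q) ^ 2 := by field_simp
    _ ≤ c ^ 2 * (8 * exp ((a / q - 1) ^ 2)) + c * (2 * exp ((a / q - 1) ^ 2)) := by
        gcongr
        · exact pow_four_le_eight_mul_exp_sub_one_sq _
        · exact sq_le_two_mul_exp_sub_one_sq _
    _ = (8 * c ^ 2 + 2 * c) * exp ((a / q - 1) ^ 2) := by ring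
    _ ≤ (8 * c ^ 2 + 2 * c) * exp (c / 2 * (q - a) ^ 2 / q) := by gcongr

lemma exp_neg_div_mul_exp_neg_mul (c a : ℝ) (hq : q ≠ 0) :
    exp (-(c * a ^ 2 / q)) * exp (-(c * q))
      = exp (-(2 * c * a)) * exp (-(c * (q - a) ^ 2 / q)) := by
  rw [← exp_add, ← exp_add]
  congr 1
  field_simp
  ring

lemma norm_zetaKernelDeriv₂_diagonal_mul_exp_le {n : ℕ} {b : ℝ} (hn : n = π * a ^ 2)
    (hb : 2 * π ≤ b) (hρ : 0 < ρ) :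
    ‖zetaKernelDeriv₂ n (ρ • ((1 + Complex.I) / 2))‖ * exp (-(b * (ρ / 2)))
      ≤ 16 * exp (2 + π) * (8 * π ^ 2 + 2 * π) * exp (-(2 * π * a))
        * exp (-(π / 2 * (ρ + 1 - a) ^ 2 / (ρ + 1))) := by
  have h_oscillation : exp (-(b * (ρ / 2))) ≤ exp π * exp (-(π * (ρ + 1))) := by
    rw [← exp_add, exp_le_exp]
    nlinarith
  have h_prefactor := add_le_mul_exp_mul_sub_sq_div (c := π) (q := ρ + 1) two_le_pi (by linarith) a
  have h_kernel := norm_zetaKernelDeriv₂_diagonal_le n hρ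
  rw [hn] at h_kernel
  -- half of the decay away from `ρ + 1 = a` is spent on absorbing the polynomial prefactor
  have h_halve : exp (π / 2 * (ρ + 1 - a) ^ 2 / (ρ + 1)) * exp (-(π * (ρ + 1 - a) ^ 2 / (ρ + 1)))
      = exp (-(π / 2 * (ρ + 1 - a) ^ 2 / (ρ + 1))) := by
    rw [← exp_add]
    ring_nf
  calc ‖zetaKernelDeriv₂ n (ρ • ((1 + Complex.I) / 2))‖ * exp (-(b * (ρ / 2)))
      ≤ 16 * exp 2 * ((8 * π ^ 2 + 2 * π) * exp (π / 2 * (ρ + 1 - a) ^ 2 / (ρ + 1)))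
          * exp (-(π * a ^ 2 / (ρ + 1))) * (exp π * exp (-(π * (ρ + 1)))) := by
        grw [h_oscillation, h_kernel, h_prefactor]
    _ = 16 * (exp 2 * exp π) * (8 * π ^ 2 + 2 * π) * exp (π / 2 * (ρ + 1 - a) ^ 2 / (ρ + 1))
          * (exp (-(π * a ^ 2 / (ρ + 1))) * exp (-(π * (ρ + 1)))) := by ring
    _ = _ := by
        rw [exp_neg_div_mul_exp_neg_mul π a (by positivity), ← h_halve, exp_add]
        ring

lemma abs_integral_cos_mul_zetaKernelDeriv₂_le_mul_exp {n : ℕ} {b : ℝ} (ha : 0 < a)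
    (hn : n = π * a ^ 2) (hb : 2 * π ≤ b) :
    |∫ t in Set.Ioi 0, cos (b * t) * zetaKernelDeriv₂ n t|
      ≤ 16 * exp (2 + π) * (8 * π ^ 2 + 2 * π) * exp (-(2 * π * a)) * (2 * √a + 8 / π) := by
  have h_norm : ‖(1 + Complex.I) / 2‖ ≤ 1 := by
    rw [add_div]
    refine (norm_add_le _ _).trans_eq ?_
    norm_num
  have h_re : 0 < ((1 + Complex.I) / 2).re := by simp
  have h_im : ((1 + Complex.I) / 2).im = 1 / 2 := by simp
  have h_integrable := integrableOn_exp_neg_mul_add_sub_sq_div (by positivity : 0 < π / 2) ha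
    zero_le_one
  have h_sqrt : √(2 * π * a / (π / 2)) + 4 / (π / 2) = 2 * √a + 8 / π := by
    have h_arg : 2 * π * a / (π / 2) = 2 ^ 2 * a := by
      field_simp
    rw [h_arg, sqrt_mul (by norm_num), sqrt_sq zero_le_two]
    field_simp
    ring
  calc |∫ t in Set.Ioi 0, cos (b * t) * zetaKernelDeriv₂ n t|
      ≤ 1 * ∫ t in Set.Ioi (0 : ℝ),
          ‖zetaKernelDeriv₂ n (t • ((1 + Complex.I) / 2))‖ * exp (-(b * (t / 2))) := by
        refine (abs_integral_cos_mul_zetaKernelDeriv₂_le (by linarith [pi_pos]) h_re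
          (by simp)).trans ?_
        simp only [h_im, mul_one_div]
        gcongr
    _ ≤ 16 * exp (2 + π) * (8 * π ^ 2 + 2 * π) * exp (-(2 * π * a))
          * ∫ t in Set.Ioi (0 : ℝ), exp (-(π / 2 * (t + 1 - a) ^ 2 / (t + 1))) := by
        rw [one_mul, ← integral_const_mul]
        refine integral_mono_of_nonneg (.of_forall fun t ↦ by positivity)
          (h_integrable.const_mul _) ?_
        filter_upwards [ae_restrict_mem measurableSet_Ioi] with t ht
        exact norm_zetaKernelDeriv₂_diagonal_mul_exp_le hn hb ht
    _ ≤ _ := by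
        rw [← h_sqrt]
        gcongr
        exact integral_exp_neg_mul_add_sub_sq_div_le (by positivity) ha zero_le_one

lemma exists_abs_integral_cos_mul_zetaKernelDeriv₂_le :
    ∃ C > 0, ∀ n : ℕ, n ≠ 0 → ∀ b ≥ 2 * π,
      |∫ t in Set.Ioi 0, cos (b * t) * zetaKernelDeriv₂ n t|
        ≤ C * (n : ℝ) ^ ((1 : ℝ) / 4) * exp (-2 * √(π * n)) := by
  refine ⟨16 * exp (2 + π) * (8 * π ^ 2 + 2 * π) * (2 + 8 / π), by positivity,
    fun n hn b hb ↦ ?_⟩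
  have h_one_le : (1 : ℝ) ≤ n := mod_cast Nat.one_le_iff_ne_zero.mpr hn
  have hn_eq : (n : ℝ) = π * √(n / π) ^ 2 := by
    rw [sq_sqrt (by positivity)]
    field_simp
  have h_exponent : -(2 * π * √(n / π)) = -2 * √(π * n) := by
    have h_arg : π * n = π ^ 2 * (n / π) := by field_simp
    rw [h_arg, sqrt_mul (by positivity), sqrt_sq pi_pos.le]
    ring
  have h_root : √√(n / π) ≤ (n : ℝ) ^ ((1 : ℝ) / 4) := by
    rw [sqrt_eq_rpow, sqrt_eq_rpow, ← rpow_mul (by positivity)]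
    norm_num1
    gcongr
    exact div_le_self (by positivity) (by linarith [two_le_pi])
  have h_power : 1 ≤ (n : ℝ) ^ ((1 : ℝ) / 4) := one_le_rpow h_one_le (by norm_num)
  calc |∫ t in Set.Ioi 0, cos (b * t) * zetaKernelDeriv₂ n t|
      ≤ 16 * exp (2 + π) * (8 * π ^ 2 + 2 * π) * exp (-(2 * π * √(n / π)))
          * (2 * √√(n / π) + 8 / π * 1) := by
        rw [mul_one]
        exact abs_integral_cos_mul_zetaKernelDeriv₂_le_mul_exp (by positivity) hn_eq hb
    _ ≤ 16 * exp (2 + π) * (8 * π ^ 2 + 2 * π) * exp (-2 * √(π * n))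
          * (2 * (n : ℝ) ^ ((1 : ℝ) / 4) + 8 / π * (n : ℝ) ^ ((1 : ℝ) / 4)) := by
        rw [h_exponent]
        gcongr
    _ = _ := by ring

end DiagonalRay

/-- The case `m = k = 1` of the asymptotics for `H_n(m,k)`: for the differences of zeta
values, `∑_{l=2}^n (-1)^l C(n,l) ζ(l) = 1/2 - n(1 - γ - h_{n-1}) + O(n^{1/4} e^{-2√(πn)})`. -/
theorem zeta_differences_asymptotics :
    ∃ C : ℝ, 0 < C ∧ ∀ n : ℕ, 2 ≤ n →
      |(∑ l ∈ Finset.Icc 2 n, (-1 : ℝ) ^ l * (n.choose l : ℝ) *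
            (∑' j : ℕ, 1 / ((j : ℝ) + 1) ^ l)) -
          (1 / 2 - (n : ℝ) * (1 - Real.eulerMascheroniConstant - harm (n - 1)))| ≤
        C * (n : ℝ) ^ ((1 : ℝ) / 4) * Real.exp (-2 * Real.sqrt (Real.pi * n)) := by
  obtain ⟨C, hC_pos, hC⟩ := exists_abs_integral_cos_mul_zetaKernelDeriv₂_le
  refine ⟨C / 12, by positivity, fun n hn ↦ ?_⟩
  have h_int := integrableOn_zetaKernelDeriv₂ n
  have h_coeff : ∀ k : ℕ, k ≠ 0 →
      |∫ t in Set.Ioi 0, cos (2 * π * k * t) * zetaKernelDeriv₂ n t|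
        ≤ C * (n : ℝ) ^ ((1 : ℝ) / 4) * exp (-2 * √(π * n)) := fun k hk ↦
    hC n (by lia) _ (le_mul_of_one_le_right two_pi_pos.le
      (mod_cast Nat.one_le_iff_ne_zero.mpr hk))
  have h_remainder := abs_integral_periodizedBernoulli_two_mul_le h_int h_coeff
  rw [sum_Icc_choose_mul_zeta_eq hn h_int, sub_sub_cancel_left, abs_neg, abs_mul,
    abs_of_pos one_half_pos]
  linarith
end

section
/- There exists a constant C > 0 such that for all integers n ≥ 2, | Σ_{l=2}^{n} (−1)^l C(n,l) (1 − 2^{−l}) ζ(l) − (n/2)(h_{n−1} + γ + log 2 − 1) | ≤ C · n^{1/4} · exp(−√(2πn)). (The case m = 1, k = 2 of the asymptotic for H_n(m,k), using 2^{−l} ζ(l, 1/2) = (1 − 2^{−l}) ζ(l).) -/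
open Finset Real

/-!
By the binomial theorem the alternating sum `∑_l (-1)^l C(n,l) a^l ζ(l, a)` equals
`∑_{m ≥ 0} ((m/(m+a))^n - 1 + n a/(m+a))`. Euler–Maclaurin summation of second order evaluates
it exactly, up to `-(1/(2a²)) ∫_0^∞ g''(x/a) B₂({x}) dx` with `g(y) = (y/(1+y))^n`: the
antiderivative of `g - 1` produces the harmonic number, and `∑ 1/(m+a)` the digamma value `ψ(a)`.

The Fourier series of `B₂` turns the last integral into oscillatory integrals of `g''(y) e^{iωy}`
with `ω = 2πka`, `k ≥ 1`. Rotate the ray of integration to `y = r e^{iπ/4}` and put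
`s = r + √2/2`. There `|1 + y| ≥ s`, so that `|g(y)| ≤ (r/s)^n ≤ e^{-n/(√2 s)}`, while
`|e^{iωy}| = e^{ω/2} e^{-ωs/√2}`. Completing the square, `n/s + ωs = (√ω s - √n)²/s + 2√(ωn)`: the
last term gives the saving `e^{-√(2ωn)}`, weakest for `k = 1`, and integrating the Gaussian factor
around `s = √(n/ω)` gives the power `n^{1/4}`.
-/

open MeasureTheory Filter Topology
open scoped Interval

section ContourRotation

theorem integral_Ioi_zero_eq_integral_exp_smul {E : Type*} [NormedAddCommGroup E]
    [NormedSpace ℝ E] (f : ℝ → E) :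
    ∫ r in Set.Ioi (0 : ℝ), f r = ∫ x : ℝ, exp x • f (exp x) := by
  have h := integral_image_eq_integral_abs_deriv_smul MeasurableSet.univ
    (fun x _ => (Real.hasDerivAt_exp x).hasDerivWithinAt) Real.exp_injective.injOn f
  simpa only [Set.image_univ, Real.range_exp, setIntegral_univ, Real.abs_exp] using h

theorem integrableOn_Ioi_zero_iff_integrable_exp_smul {E : Type*} [NormedAddCommGroup E]
    [NormedSpace ℝ E] (f : ℝ → E) :
    IntegrableOn f (Set.Ioi 0) ↔ Integrable fun x : ℝ => exp x • f (exp x) := by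
  have h := integrableOn_image_iff_integrableOn_abs_deriv_smul MeasurableSet.univ
    (fun x _ => (Real.hasDerivAt_exp x).hasDerivWithinAt) Real.exp_injective.injOn f
  simpa only [Set.image_univ, Real.range_exp, integrableOn_univ, Real.abs_exp] using h

variable {E : Type*} [NormedAddCommGroup E] [NormedSpace ℂ E]

theorem norm_integral_horizontal_sub_le {f : ℂ → E} {g : ℝ → ℝ} {b : ℝ}
    (hf : ∀ z : ℂ, z.im ∈ [[0, b]] → DifferentiableAt ℂ f z)
    (hfg : ∀ z : ℂ, z.im ∈ [[0, b]] → ‖f z‖ ≤ g z.re) (S T : ℝ) :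
    ‖(∫ x in S..T, f x) - ∫ x in S..T, f (x + b * Complex.I)‖ ≤ (g S + g T) * |b| := by
  have vertical (x : ℝ) : ‖Complex.I • ∫ y in (0 : ℝ)..b, f (x + y * Complex.I)‖ ≤ g x * |b| := by
    rw [norm_smul, Complex.norm_I, one_mul]
    refine (intervalIntegral.norm_integral_le_of_norm_le_const fun y hy => ?_).trans_eq
      (by rw [sub_zero])
    simpa using hfg (x + y * Complex.I) (by simpa using Set.uIoc_subset_uIcc hy)
  have rect := Complex.integral_boundary_rect_eq_zero_of_differentiableOn f S (T + b * Complex.I)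
    fun z hz => (hf z (by simpa using hz.2)).differentiableWithinAt
  simp only [Complex.ofReal_im, Complex.ofReal_re, Complex.add_re, Complex.add_im,
    Complex.mul_re, Complex.mul_im, Complex.I_re, Complex.I_im, mul_zero, mul_one,
    sub_self, add_zero, zero_add, Complex.ofReal_zero, zero_mul] at rect
  calc _ = ‖(Complex.I • ∫ y in (0 : ℝ)..b, f (S + y * Complex.I)) -
        Complex.I • ∫ y in (0 : ℝ)..b, f (T + y * Complex.I)‖ := by
        rw [← sub_eq_zero.1 rect]; congr 1; abel
    _ ≤ (g S + g T) * |b| := by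
        rw [add_mul]
        exact (norm_sub_le _ _).trans (add_le_add (vertical S) (vertical T))

theorem integral_eq_integral_add_mul_I {f : ℂ → E} {g : ℝ → ℝ} {b : ℝ}
    (hf : ∀ z : ℂ, z.im ∈ [[0, b]] → DifferentiableAt ℂ f z)
    (hfg : ∀ z : ℂ, z.im ∈ [[0, b]] → ‖f z‖ ≤ g z.re) (hg : Integrable g)
    (hg_bot : Tendsto g atBot (𝓝 0)) (hg_top : Tendsto g atTop (𝓝 0)) :
    ∫ x : ℝ, f x = ∫ x : ℝ, f (x + b * Complex.I) := by
  have integrable_line (y : ℝ) (hy : y ∈ [[0, b]]) :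
      Integrable fun x : ℝ => f (x + y * Complex.I) := by
    have im_mem (x : ℝ) : (x + y * Complex.I : ℂ).im ∈ [[0, b]] := by simpa using hy
    refine hg.mono' (Continuous.aestronglyMeasurable ?_)
      (ae_of_all _ fun x => by simpa using hfg _ (im_mem x))
    exact continuous_iff_continuousAt.2 fun x =>
      (hf _ (im_mem x)).continuousAt.comp (f := fun x : ℝ => (x + y * Complex.I : ℂ)) (by fun_prop)
  have lim_bottom := intervalIntegral_tendsto_integral
    (integrable_line 0 Set.left_mem_uIcc) tendsto_neg_atTop_atBot tendsto_id
  have lim_top := intervalIntegral_tendsto_integral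
    (integrable_line b Set.right_mem_uIcc) tendsto_neg_atTop_atBot tendsto_id
  simp only [Complex.ofReal_zero, zero_mul, add_zero] at lim_bottom
  refine sub_eq_zero.1 (tendsto_nhds_unique (lim_bottom.sub lim_top) ?_)
  refine squeeze_zero_norm (fun T => norm_integral_horizontal_sub_le hf hfg (-T) T) ?_
  simpa using ((hg_bot.comp tendsto_neg_atTop_atBot).add hg_top).mul_const |b|

theorem integral_Ioi_eq_integral_Ioi_mul_exp_I {f : ℂ → E} {g : ℝ → ℝ} {θ : ℝ}
    (hf : ∀ r : ℝ, 0 < r → ∀ φ ∈ [[0, θ]], DifferentiableAt ℂ f (r * Complex.exp (φ * Complex.I)))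
    (hfg : ∀ r : ℝ, 0 < r → ∀ φ ∈ [[0, θ]], ‖f (r * Complex.exp (φ * Complex.I))‖ ≤ g r)
    (hg : IntegrableOn g (Set.Ioi 0)) (hg_zero : Tendsto (fun r => r * g r) (𝓝[>] 0) (𝓝 0))
    (hg_top : Tendsto (fun r => r * g r) atTop (𝓝 0)) :
    ∫ r in Set.Ioi (0 : ℝ), f r = Complex.exp (θ * Complex.I) •
      ∫ r in Set.Ioi (0 : ℝ), f (r * Complex.exp (θ * Complex.I)) := by
  have exp_polar (z : ℂ) :
      Complex.exp z = (exp z.re : ℝ) * Complex.exp (z.im * Complex.I) := by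
    rw [Complex.ofReal_exp, ← Complex.exp_add, Complex.re_add_im]
  have shift := integral_eq_integral_add_mul_I (b := θ)
    (f := fun z => Complex.exp z • f (Complex.exp z)) (g := fun x => exp x * g (exp x))
    (fun z hz => Complex.differentiableAt_exp.smul (DifferentiableAt.comp z
      (by simpa only [exp_polar z] using hf _ (exp_pos _) _ hz) Complex.differentiableAt_exp))
    (fun z hz => by
      rw [norm_smul, Complex.norm_exp, exp_polar z]
      exact mul_le_mul_of_nonneg_left (hfg _ (exp_pos _) _ hz) (exp_pos _).le)
    ((integrableOn_Ioi_zero_iff_integrable_exp_smul g).1 hg)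
    (hg_zero.comp tendsto_exp_atBot_nhdsGT) (hg_top.comp tendsto_exp_atTop)
  rw [integral_Ioi_zero_eq_integral_exp_smul, integral_Ioi_zero_eq_integral_exp_smul,
    ← integral_smul]
  convert shift using 2
  · ext x
    rw [← Complex.ofReal_exp, Complex.coe_smul]
  · ext x
    rw [Complex.exp_add, ← Complex.ofReal_exp, ← Complex.coe_smul, smul_smul, mul_comm]

end ContourRotation

section EulerMaclaurin

variable {f f' f'' : ℝ → ℝ}

theorem continuous_bernoulliFun_fract {k : ℕ} (hk : k ≠ 1) :
    Continuous fun x : ℝ => bernoulliFun k (Int.fract x) :=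
  (continuous_bernoulliFun k).continuousOn.comp_fract''
    (bernoulliFun_endpoints_eq_of_ne_one hk).symm

theorem integral_mul_bernoulliFun_two_sub {a : ℝ}
    (hf : ∀ x ∈ Set.Icc a (a + 1), HasDerivAt f (f' x) x)
    (hf' : ∀ x ∈ Set.Icc a (a + 1), HasDerivAt f' (f'' x) x)
    (hf'' : ContinuousOn f'' (Set.Icc a (a + 1))) :
    (∫ x in a..a + 1, f'' x * bernoulliFun 2 (x - a)) =
      2 * (∫ x in a..a + 1, f x) - (f a + f (a + 1)) + (f' (a + 1) - f' a) / 6 := by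
  have hle : a ≤ a + 1 := by linarith
  have hderiv (x : ℝ) (hx : x ∈ [[a, a + 1]]) :
      HasDerivAt (fun x => f' x * bernoulliFun 2 (x - a) - 2 * (f x * bernoulliFun 1 (x - a)))
        (f'' x * bernoulliFun 2 (x - a) - 2 * f x) x := by
    rw [Set.uIcc_of_le hle] at hx
    have hB (k : ℕ) := (hasDerivAt_bernoulliFun k (x - a)).comp_sub_const x a
    refine (((hf' x hx).mul (hB 2)).sub (((hf x hx).mul (hB 1)).const_mul 2)).congr_deriv ?_
    simp only [bernoulliFun_zero, Nat.reduceSub, tsub_self, Nat.cast_ofNat, Nat.cast_one]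
    ring
  have hint_f : IntervalIntegrable f volume a (a + 1) :=
    ContinuousOn.intervalIntegrable_of_Icc hle
      fun x hx => (hf x hx).continuousAt.continuousWithinAt
  have hint_f'' : IntervalIntegrable (fun x => f'' x * bernoulliFun 2 (x - a)) volume a (a + 1) :=
    ContinuousOn.intervalIntegrable_of_Icc hle (hf''.mul
      ((continuous_bernoulliFun 2).comp' (continuous_id.sub continuous_const)).continuousOn)
  have hFTC := intervalIntegral.integral_eq_sub_of_hasDerivAt hderiv
    (hint_f''.sub (hint_f.const_mul 2))
  rw [intervalIntegral.integral_sub hint_f'' (hint_f.const_mul 2),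
    intervalIntegral.integral_const_mul] at hFTC
  simp only [add_sub_cancel_left, sub_self, bernoulliFun_one, bernoulliFun_two 0,
    bernoulliFun_two 1] at hFTC
  linarith

theorem bernoulliFun_two_fract_eq {a : ℤ} {x : ℝ} (hx : x ∈ Set.Icc (a : ℝ) (a + 1)) :
    bernoulliFun 2 (Int.fract x) = bernoulliFun 2 (x - a) := by
  rcases hx.2.eq_or_lt with rfl | hlt
  · simp [bernoulliFun_endpoints_eq_of_ne_one]
  · rw [Int.fract, Int.floor_eq_iff.2 ⟨hx.1, hlt⟩]

theorem sum_range_eq_integral_sub_integral_bernoulliFun_two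
    (hf : ∀ x, 0 ≤ x → HasDerivAt f (f' x) x) (hf' : ∀ x, 0 ≤ x → HasDerivAt f' (f'' x) x)
    (hf'' : ContinuousOn f'' (Set.Ici 0)) (M : ℕ) :
    ∑ m ∈ range M, f m = (∫ x in (0 : ℝ)..M, f x) - (f M - f 0) / 2 + (f' M - f' 0) / 12 -
      (∫ x in (0 : ℝ)..M, f'' x * bernoulliFun 2 (Int.fract x)) / 2 := by
  have cell (m : ℕ) : (∫ x in (m : ℝ)..m + 1, f'' x * bernoulliFun 2 (Int.fract x)) =
      2 * (∫ x in (m : ℝ)..m + 1, f x) - (f m + f (m + 1)) + (f' (m + 1) - f' m) / 6 := by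
    have nonneg {x : ℝ} (hx : x ∈ Set.Icc (m : ℝ) (m + 1)) : 0 ≤ x := m.cast_nonneg.trans hx.1
    rw [← integral_mul_bernoulliFun_two_sub (fun x hx => hf x (nonneg hx))
      (fun x hx => hf' x (nonneg hx)) (hf''.mono fun x hx => nonneg hx)]
    refine intervalIntegral.integral_congr fun x hx => ?_
    rw [Set.uIcc_of_le (by linarith)] at hx
    simp only [bernoulliFun_two_fract_eq (a := m) (by exact_mod_cast hx), Int.cast_natCast]
  have sum_cells {g : ℝ → ℝ} (hg : ContinuousOn g (Set.Ici 0)) :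
      ∑ m ∈ range M, ∫ x in (m : ℝ)..m + 1, g x = ∫ x in (0 : ℝ)..M, g x := by
    simpa using intervalIntegral.sum_integral_adjacent_intervals (a := fun m : ℕ => (m : ℝ))
      (f := g) (n := M) fun m _ => ContinuousOn.intervalIntegrable_of_Icc
        (Nat.cast_le.2 m.le_succ) (hg.mono fun x hx => m.cast_nonneg.trans hx.1)
  have telescope (g : ℝ → ℝ) : ∑ m ∈ range M, (g (m + 1) - g m) = g M - g 0 := by
    simpa using sum_range_sub (fun m : ℕ => g m) M
  rw [← sum_cells fun x hx => (hf x hx).continuousAt.continuousWithinAt,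
    ← sum_cells (hf''.fun_mul (continuous_bernoulliFun_fract (by decide)).continuousOn),
    ← telescope f, ← telescope f', sum_congr rfl fun m _ => cell m]
  simp only [sum_div, ← sum_sub_distrib, ← sum_add_distrib]
  exact sum_congr rfl fun m _ => by ring

end EulerMaclaurin

section BernoulliFourier

theorem hasSum_cos_div_sq_bernoulliFun_two_fract (x : ℝ) :
    HasSum (fun k : ℕ => 1 / (k : ℝ) ^ 2 * cos (2 * π * k * x))
      (π ^ 2 * bernoulliFun 2 (Int.fract x)) := by
  convert! hasSum_one_div_nat_pow_mul_cos one_ne_zero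
    ⟨Int.fract_nonneg x, (Int.fract_lt_one x).le⟩ using 1
  · ext k
    have hperiod : 2 * π * k * x = 2 * π * k * Int.fract x + (k * ⌊x⌋ : ℤ) * (2 * π) := by
      rw [Int.fract]; push_cast; ring
    rw [hperiod, cos_add_int_mul_two_pi, mul_one]
  · simp only [bernoulliFun, mul_one, Nat.reduceAdd, Nat.factorial]
    push_cast
    ring

theorem integral_mul_bernoulliFun_two_fract_eq_tsum {μ : Measure ℝ} {h : ℝ → ℝ}
    (hh : Integrable h μ) :
    π ^ 2 * (∫ x, h x * bernoulliFun 2 (Int.fract x) ∂μ) =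
      ∑' k : ℕ, 1 / (k : ℝ) ^ 2 * ∫ x, h x * cos (2 * π * k * x) ∂μ := by
  have integrable_mul_cos (k : ℕ) : Integrable (fun x => h x * cos (2 * π * k * x)) μ :=
    hh.mul_bdd (c := 1) (by fun_prop) (ae_of_all _ fun x => abs_cos_le_one _)
  have norm_mul_cos_le (k : ℕ) (x : ℝ) : ‖h x * cos (2 * π * k * x)‖ ≤ ‖h x‖ := by
    rw [norm_mul]
    exact mul_le_of_le_one_right (norm_nonneg _) (abs_cos_le_one _)
  have hsum := hasSum_integral_of_summable_integral_norm
    (F := fun (k : ℕ) x => 1 / (k : ℝ) ^ 2 * (h x * cos (2 * π * k * x)))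
    (fun k => (integrable_mul_cos k).const_mul _) <| by
      refine (hasSum_zeta_two.summable.mul_right (∫ x, ‖h x‖ ∂μ)).of_nonneg_of_le
        (fun k => integral_nonneg fun x => norm_nonneg _) fun k => ?_
      simp only [norm_mul (1 / (k : ℝ) ^ 2), norm_of_nonneg (by positivity : 0 ≤ 1 / (k : ℝ) ^ 2),
        integral_const_mul]
      exact mul_le_mul_of_nonneg_left
        (integral_mono (integrable_mul_cos k).norm hh.norm (norm_mul_cos_le k)) (by positivity)
  simp only [integral_const_mul] at hsum
  rw [hsum.tsum_eq, ← integral_const_mul]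
  refine integral_congr_ae (ae_of_all _ fun x => ?_)
  have := ((hasSum_cos_div_sq_bernoulliFun_two_fract x).mul_left (h x)).tsum_eq
  simp only [mul_left_comm (h x)] at this
  exact this.symm

theorem integrable_mul_bernoulliFun_fract {k : ℕ} (hk : k ≠ 1) {μ : Measure ℝ} {h : ℝ → ℝ}
    (hh : Integrable h μ) : Integrable (fun x => h x * bernoulliFun k (Int.fract x)) μ := by
  obtain ⟨C, hC⟩ := (isCompact_Icc (a := (0 : ℝ)) (b := 1)).exists_bound_of_continuousOn
    (continuous_bernoulliFun k).continuousOn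
  exact hh.mul_bdd (c := C) (continuous_bernoulliFun_fract hk).aestronglyMeasurable
    (ae_of_all _ fun x => hC _ ⟨Int.fract_nonneg x, (Int.fract_lt_one x).le⟩)

theorem abs_integral_mul_bernoulliFun_two_fract_le {μ : Measure ℝ} {h : ℝ → ℝ}
    (hh : Integrable h μ) {B : ℝ} (hB : ∀ k : ℕ, k ≠ 0 → |∫ x, h x * cos (2 * π * k * x) ∂μ| ≤ B) :
    |∫ x, h x * bernoulliFun 2 (Int.fract x) ∂μ| ≤ B / 6 := by
  have htsum := tsum_of_norm_bounded (hasSum_zeta_two.mul_right B)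
    (f := fun k : ℕ => 1 / (k : ℝ) ^ 2 * ∫ x, h x * cos (2 * π * k * x) ∂μ) fun k => by
      rcases eq_or_ne k 0 with rfl | hk
      · simp
      · rw [norm_mul, norm_of_nonneg (by positivity)]
        exact mul_le_mul_of_nonneg_left (hB k hk) (by positivity)
  rw [← integral_mul_bernoulliFun_two_fract_eq_tsum hh, norm_mul,
    norm_of_nonneg (by positivity : 0 ≤ π ^ 2), div_mul_eq_mul_div, mul_div_assoc] at htsum
  exact le_of_mul_le_mul_left htsum (by positivity)

end BernoulliFourier

section Kernel

/-- The second derivative of `y ↦ (y / (1 + y)) ^ n`, over an arbitrary field so that the same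
formula serves on the real line and on rotated rays in the complex plane. The exponent `n - 2` is
truncated, so this is the derivative only for `2 ≤ n`. -/
noncomputable def ratioPowDerivTwo {𝕜 : Type*} [Field 𝕜] (n : ℕ) (y : 𝕜) : 𝕜 :=
  n * (n - 1 - 2 * y) * (y / (1 + y)) ^ (n - 2) / (1 + y) ^ 4

section Field

variable {𝕜 : Type*} [NontriviallyNormedField 𝕜] {n : ℕ} {y : 𝕜}

theorem hasDerivAt_div_one_add (hy : 1 + y ≠ 0) :
    HasDerivAt (fun y => y / (1 + y)) (1 / (1 + y) ^ 2) y := by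
  refine ((hasDerivAt_id y).div ((hasDerivAt_id y).const_add 1) hy).congr_deriv ?_
  rw [id_eq]
  ring

theorem hasDerivAt_div_one_add_pow (hy : 1 + y ≠ 0) :
    HasDerivAt (fun y => (y / (1 + y)) ^ n) (n * (y / (1 + y)) ^ (n - 1) / (1 + y) ^ 2) y := by
  refine ((hasDerivAt_div_one_add hy).pow n).congr_deriv ?_
  ring

theorem hasDerivAt_div_one_add_pow_deriv (hn : 2 ≤ n) (hy : 1 + y ≠ 0) :
    HasDerivAt (fun y : 𝕜 => n * (y / (1 + y)) ^ (n - 1) / (1 + y) ^ 2)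
      (ratioPowDerivTwo n y) y := by
  obtain ⟨m, rfl⟩ := Nat.exists_eq_add_of_le' hn
  refine (((hasDerivAt_div_one_add_pow (n := m + 1) hy).const_mul ((m + 2 : ℕ) : 𝕜)).div
    (((hasDerivAt_id y).const_add 1).pow 2) (pow_ne_zero 2 hy)).congr_deriv ?_
  simp only [ratioPowDerivTwo, id_eq, Nat.add_sub_cancel, pow_succ, Pi.pow_apply]
  push_cast
  field_simp
  ring

theorem differentiableAt_ratioPowDerivTwo (hy : 1 + y ≠ 0) :
    DifferentiableAt 𝕜 (ratioPowDerivTwo n) y := by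
  unfold ratioPowDerivTwo
  fun_prop (disch := simp [hy])

end Field

variable {n : ℕ}

theorem ofReal_ratioPowDerivTwo (n : ℕ) (x : ℝ) :
    ((ratioPowDerivTwo n x : ℝ) : ℂ) = ratioPowDerivTwo n (x : ℂ) := by
  simp [ratioPowDerivTwo]

theorem norm_ratioPowDerivTwo_le {𝕜 : Type*} [RCLike 𝕜] (hn : 1 ≤ n) (y : 𝕜) :
    ‖ratioPowDerivTwo n y‖ ≤
      n * (n + 2 * ‖y‖) / ‖1 + y‖ ^ 4 * (‖y‖ / ‖1 + y‖) ^ (n - 2) := by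
  have norm_linear_le : ‖(n - 1 - 2 * y : 𝕜)‖ ≤ n + 2 * ‖y‖ := by
    rw [← Nat.cast_pred hn]
    refine (norm_sub_le _ _).trans ?_
    rw [norm_mul, RCLike.norm_natCast, RCLike.norm_two]
    gcongr
    exact n.sub_le 1
  rw [ratioPowDerivTwo, norm_div, norm_mul, norm_mul, norm_pow, norm_pow, norm_div,
    RCLike.norm_natCast, mul_div_right_comm]
  gcongr

theorem one_add_norm_sq_le_norm_one_add_sq {𝕜 : Type*} [RCLike 𝕜] {y : 𝕜}
    (hy : 0 ≤ RCLike.re y) : 1 + ‖y‖ ^ 2 ≤ ‖1 + y‖ ^ 2 := by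
  rw [norm_add_sq (𝕜 := 𝕜), norm_one]
  simp only [RCLike.inner_apply, map_one, mul_one, one_pow]
  linarith

theorem norm_ratioPowDerivTwo_le_inv_one_add_sq {𝕜 : Type*} [RCLike 𝕜] (hn : 1 ≤ n) {y : 𝕜}
    (hy : 0 ≤ RCLike.re y) :
    ‖ratioPowDerivTwo n y‖ ≤ 2 * n * (n + 2) * (1 + ‖y‖ ^ 2)⁻¹ := by
  have hsq := one_add_norm_sq_le_norm_one_add_sq hy
  have hratio : ‖y‖ / ‖1 + y‖ ≤ 1 :=
    div_le_one_of_le₀ ((sq_le_sq₀ (norm_nonneg _) (norm_nonneg _)).1 (by linarith)) (norm_nonneg _)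
  calc ‖ratioPowDerivTwo n y‖
      ≤ n * (n + 2 * ‖y‖) / ‖1 + y‖ ^ 4 * (‖y‖ / ‖1 + y‖) ^ (n - 2) :=
        norm_ratioPowDerivTwo_le hn y
    _ ≤ n * (n + 2 * ‖y‖) / (1 + ‖y‖ ^ 2) ^ 2 := by
        rw [show 4 = 2 * 2 from rfl, pow_mul]
        refine (mul_le_of_le_one_right (by positivity)
          (pow_le_one₀ (by positivity) hratio)).trans ?_
        gcongr
    _ ≤ 2 * n * (n + 2) * (1 + ‖y‖ ^ 2)⁻¹ := by
        rw [← div_eq_mul_inv, div_le_div_iff₀ (by positivity) (by positivity)]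
        have : n + 2 * ‖y‖ ≤ 2 * (n + 2) * (1 + ‖y‖ ^ 2) := by
          nlinarith [sq_nonneg (‖y‖ - 1), norm_nonneg y]
        nlinarith [mul_le_mul_of_nonneg_left this
          (by positivity : 0 ≤ n * (1 + ‖y‖ ^ 2))]

theorem integrableOn_ratioPowDerivTwo (hn : 1 ≤ n) :
    IntegrableOn (ratioPowDerivTwo (𝕜 := ℝ) n) (Set.Ioi 0) := by
  refine (integrable_inv_one_add_sq.integrableOn.const_mul (2 * n * (n + 2) : ℝ)).mono'
    (ContinuousOn.aestronglyMeasurable (fun y hy => ?_) measurableSet_Ioi)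
    ((ae_restrict_iff' measurableSet_Ioi).2 (ae_of_all _ fun y hy => ?_))
  · exact (differentiableAt_ratioPowDerivTwo
      (add_pos one_pos hy).ne').continuousAt.continuousWithinAt
  · simpa using norm_ratioPowDerivTwo_le_inv_one_add_sq hn (y := y) (le_of_lt hy)

theorem integrableOn_ratioPowDerivTwo_div (hn : 1 ≤ n) {a : ℝ} (ha : 0 < a) :
    IntegrableOn (fun x : ℝ => ratioPowDerivTwo n (x / a)) (Set.Ioi 0) := by
  simp only [div_eq_mul_inv _ a]
  rw [integrableOn_Ioi_comp_mul_right_iff _ _ (inv_pos.2 ha), zero_mul]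
  exact integrableOn_ratioPowDerivTwo hn

theorem tendsto_mul_inv_one_add_sq_nhds_zero :
    Tendsto (fun r : ℝ => r * (1 + r ^ 2)⁻¹) (𝓝 0) (𝓝 0) := by
  have hcont : ContinuousAt (fun r : ℝ => r * (1 + r ^ 2)⁻¹) 0 := by
    fun_prop (disch := norm_num)
  simpa only [ContinuousAt, zero_mul] using hcont

theorem tendsto_mul_inv_one_add_sq_atTop :
    Tendsto (fun r : ℝ => r * (1 + r ^ 2)⁻¹) atTop (𝓝 0) := by
  refine (tendsto_mul_inv_one_add_sq_nhds_zero.comp tendsto_inv_atTop_zero).congr' ?_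
  filter_upwards [eventually_ne_atTop 0] with r hr
  simp only [Function.comp_apply]
  field_simp
  ring

theorem integral_ratioPowDerivTwo_mul_exp_eq (hn : 1 ≤ n) {ω : ℝ} (hω : 0 ≤ ω) {θ : ℝ}
    (hθ : 0 ≤ θ) (hθ' : θ ≤ π / 2) :
    ∫ r in Set.Ioi (0 : ℝ), ratioPowDerivTwo n (r : ℂ) * Complex.exp (ω * r * Complex.I) =
      Complex.exp (θ * Complex.I) * ∫ r in Set.Ioi (0 : ℝ),
        ratioPowDerivTwo n (r * Complex.exp (θ * Complex.I)) *
          Complex.exp (ω * (r * Complex.exp (θ * Complex.I)) * Complex.I) := by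
  have sector {r φ : ℝ} (hr : 0 < r) (hφ : φ ∈ [[0, θ]]) :
      0 ≤ (r * Complex.exp (φ * Complex.I)).re ∧ 0 ≤ (r * Complex.exp (φ * Complex.I)).im := by
    rw [Set.uIcc_of_le hθ] at hφ
    rw [Complex.re_ofReal_mul, Complex.im_ofReal_mul, Complex.exp_ofReal_mul_I_re,
      Complex.exp_ofReal_mul_I_im]
    exact ⟨mul_nonneg hr.le (cos_nonneg_of_mem_Icc ⟨by linarith [hφ.1], by linarith [hφ.2]⟩),
      mul_nonneg hr.le (sin_nonneg_of_nonneg_of_le_pi hφ.1 (by linarith [hφ.2, pi_pos]))⟩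
  refine integral_Ioi_eq_integral_Ioi_mul_exp_I
    (f := fun y => ratioPowDerivTwo n y * Complex.exp (ω * y * Complex.I))
    (g := fun r => 2 * n * (n + 2) * (1 + r ^ 2)⁻¹) (fun r hr φ hφ => ?_) (fun r hr φ hφ => ?_)
    (integrable_inv_one_add_sq.integrableOn.const_mul _) ?_ ?_
  · refine (differentiableAt_ratioPowDerivTwo fun h => ?_).mul (by fun_prop)
    have hre := congrArg Complex.re h
    rw [Complex.add_re, Complex.one_re, Complex.zero_re] at hre
    linarith [(sector hr hφ).1]
  · have hexp : ‖Complex.exp (ω * (r * Complex.exp (φ * Complex.I)) * Complex.I)‖ ≤ 1 := by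
      rw [Complex.norm_exp, exp_le_one_iff, Complex.mul_I_re, Complex.im_ofReal_mul]
      exact neg_nonpos.2 (mul_nonneg hω (sector hr hφ).2)
    have hker := norm_ratioPowDerivTwo_le_inv_one_add_sq hn
      (y := r * Complex.exp (φ * Complex.I)) (sector hr hφ).1
    rw [norm_mul, Complex.norm_exp_ofReal_mul_I, mul_one, Complex.norm_of_nonneg hr.le] at hker
    rw [norm_mul]
    exact (mul_le_of_le_one_right (norm_nonneg _) hexp).trans hker
  · simpa only [mul_left_comm, mul_zero] using
      (tendsto_mul_inv_one_add_sq_nhds_zero.mono_left nhdsWithin_le_nhds).const_mul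
        (2 * n * (n + 2) : ℝ)
  · simpa only [mul_left_comm, mul_zero] using
      tendsto_mul_inv_one_add_sq_atTop.const_mul (2 * n * (n + 2) : ℝ)

end Kernel

section SaddlePoint

theorem exp_neg_sq_div_le_add {p t : ℝ} (ht : 0 < t) :
    exp (-((t - p) ^ 2 / (2 * t))) ≤ exp (-((t - p) ^ 2 / (4 * p))) + exp (-(t / 8)) := by
  rcases le_total t (2 * p) with htp | htp
  · refine le_add_of_le_of_nonneg (exp_le_exp.2 (neg_le_neg ?_)) (exp_pos _).le
    exact div_le_div_of_nonneg_left (sq_nonneg _) (by positivity) (by linarith)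
  · refine le_add_of_nonneg_of_le (exp_pos _).le (exp_le_exp.2 (neg_le_neg ?_))
    rw [div_le_div_iff₀ (by positivity) (by positivity)]
    nlinarith [mul_le_mul_of_nonneg_left htp ht.le]

theorem norm_integral_Ioi_le_of_norm_le_mul_exp {E : Type*} [NormedAddCommGroup E]
    [NormedSpace ℝ E] {F : ℝ → E} {K ω p c : ℝ} (hK : 0 ≤ K) (hω : 0 < ω) (hp : 0 < p)
    (hc : 0 ≤ c)
    (hF : ∀ r, 0 < r → ‖F r‖ ≤ K * exp (-((ω * (r + c) - p) ^ 2 / (2 * (ω * (r + c)))))) :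
    ‖∫ r in Set.Ioi 0, F r‖ ≤ K * ((2 * √(π * p) + 8) / ω) := by
  set G : ℝ → ℝ := fun r => exp (-(ω ^ 2 / (4 * p)) * (r + (c - p / ω)) ^ 2)
  set D : ℝ → ℝ := fun r => exp (-(ω / 8) * r)
  have hG : Integrable G := (integrable_exp_neg_mul_sq (by positivity)).comp_add_right _
  have hD : IntegrableOn D (Set.Ioi 0) := exp_neg_integrableOn_Ioi 0 (by positivity)
  have integral_G_le : ∫ r in Set.Ioi 0, G r ≤ 2 * √(π * p) / ω := calc
    ∫ r in Set.Ioi 0, G r ≤ ∫ r, G r :=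
      setIntegral_le_integral hG (ae_of_all _ fun r => (exp_pos _).le)
    _ = √(π / (ω ^ 2 / (4 * p))) := by
      rw [integral_add_right_eq_self fun r => exp (-(ω ^ 2 / (4 * p)) * r ^ 2), integral_gaussian]
    _ = √((2 / ω) ^ 2 * (π * p)) := by congr 1; field_simp; norm_num
    _ = 2 * √(π * p) / ω := by
      rw [sqrt_mul (by positivity), sqrt_sq (by positivity)]; ring
  have integral_D : ∫ r in Set.Ioi 0, D r = 8 / ω := by
    rw [integral_exp_mul_Ioi (by linarith [div_pos hω (by norm_num : (0 : ℝ) < 8)]), mul_zero,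
      exp_zero, neg_div_neg_eq, one_div_div]
  have norm_le (r : ℝ) (hr : 0 < r) : ‖F r‖ ≤ K * (G r + D r) := by
    refine (hF r hr).trans (mul_le_mul_of_nonneg_left ?_ hK)
    refine (exp_neg_sq_div_le_add (by positivity)).trans (add_le_add ?_ ?_)
    · refine le_of_eq (congrArg exp ?_)
      field_simp
      ring
    · exact exp_le_exp.2 (by nlinarith [mul_nonneg hω.le hc])
  calc ‖∫ r in Set.Ioi 0, F r‖ ≤ ∫ r in Set.Ioi 0, K * (G r + D r) :=
        norm_integral_le_of_norm_le ((hG.integrableOn.add hD).const_mul K)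
          ((ae_restrict_iff' measurableSet_Ioi).2 (ae_of_all _ norm_le))
    _ = K * ((∫ r in Set.Ioi 0, G r) + 8 / ω) := by
        rw [integral_const_mul, integral_add hG.integrableOn hD, integral_D]
    _ ≤ K * ((2 * √(π * p) + 8) / ω) := by
        rw [add_div]
        gcongr

theorem add_cos_le_norm_one_add_mul_exp_I (r θ : ℝ) :
    r + cos θ ≤ ‖1 + r * Complex.exp (θ * Complex.I)‖ := by
  have hunit : ‖Complex.exp (-(θ * Complex.I))‖ = 1 := by
    rw [← neg_mul, ← Complex.ofReal_neg, Complex.norm_exp_ofReal_mul_I]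
  have hrot : Complex.exp (-(θ * Complex.I)) * (1 + r * Complex.exp (θ * Complex.I)) =
      Complex.exp (-(θ * Complex.I)) + r := by
    rw [mul_add, mul_one, mul_left_comm, ← Complex.exp_add, neg_add_cancel, Complex.exp_zero,
      mul_one]
  calc r + cos θ = (Complex.exp (-(θ * Complex.I)) + r).re := by
        rw [← neg_mul, ← Complex.ofReal_neg, Complex.add_re, Complex.exp_ofReal_mul_I_re, cos_neg,
          Complex.ofReal_re, add_comm]
    _ ≤ ‖Complex.exp (-(θ * Complex.I)) + r‖ := Complex.re_le_norm _
    _ = ‖1 + r * Complex.exp (θ * Complex.I)‖ := by rw [← hrot, norm_mul, hunit, one_mul]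

theorem pow_four_le_mul_exp {x : ℝ} (hx : 0 ≤ x) : x ^ 4 ≤ 15000 * exp (x / 5) := by
  have := pow_div_factorial_le_exp (x / 5) (by positivity) 4
  norm_num [Nat.factorial, div_pow] at this
  linarith

theorem div_sub_pow_le_exp {c r : ℝ} (hc : 0 ≤ c) (hr : 0 < r) (n : ℕ) :
    (r / (r + c)) ^ (n - 2) ≤ exp (2 - n * (c / (r + c))) := by
  have hratio : r / (r + c) = 1 - c / (r + c) := by field_simp; ring
  have hle : c / (r + c) ≤ 1 := div_le_one_of_le₀ (by linarith) (by positivity)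
  have hn : (n : ℝ) ≤ (n - 2 : ℕ) + 2 := by exact_mod_cast le_tsub_add
  calc (r / (r + c)) ^ (n - 2) ≤ exp (-(c / (r + c))) ^ (n - 2) := by
        rw [hratio]
        exact pow_le_pow_left₀ (sub_nonneg.2 hle) (one_sub_le_exp_neg _) _
    _ = exp ((n - 2 : ℕ) * -(c / (r + c))) := (exp_nat_mul _ _).symm
    _ ≤ exp (2 - n * (c / (r + c))) :=
        exp_le_exp.2 (by
          nlinarith [mul_le_mul_of_nonneg_right hn (by positivity : 0 ≤ c / (r + c))])

theorem mul_div_pow_four_le {ω x s : ℝ} (hx : 1 ≤ x) (hs : √2 / 2 ≤ s) :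
    x * (x + 2 * s) / s ^ 4 ≤ (2 * √ω + 2 + (√ω * s - √x) ^ 2 / s) ^ 4 := by
  have hs0 : 0 < s := lt_of_lt_of_le (by positivity) hs
  have hx1 : 1 ≤ √x := one_le_sqrt.2 hx
  set u := √x / s with hu
  have hu0 : 0 ≤ u := by positivity
  have hx_eq : x = (u * s) ^ 2 := by rw [hu, div_mul_cancel₀ _ hs0.ne', sq_sqrt (by linarith)]
  have hE0 : 0 ≤ (√ω * s - √x) ^ 2 / s := by positivity
  have hu_le : u ≤ 2 * √ω + (√ω * s - √x) ^ 2 / s := by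
    have hexpand : (√ω * s - √x) ^ 2 / s = √ω ^ 2 * s + √x * (u - 2 * √ω) := by
      rw [hu]
      field_simp
      ring
    rcases le_total u (2 * √ω) with h | h
    · linarith
    · have : 0 ≤ √ω ^ 2 * s := by positivity
      nlinarith [mul_nonneg (sub_nonneg.2 hx1) (sub_nonneg.2 h)]
  have two_div_le : 2 / s ≤ 3 := by
    rw [div_le_iff₀ hs0]
    nlinarith [sq_sqrt (show (0 : ℝ) ≤ 2 by norm_num), sqrt_nonneg 2]
  calc x * (x + 2 * s) / s ^ 4 = u ^ 2 * (u ^ 2 + 2 / s) := by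
        rw [hx_eq]
        field_simp
    _ ≤ u ^ 2 * (u ^ 2 + 3) := by gcongr
    _ ≤ (u + 2) ^ 4 := by nlinarith [pow_nonneg hu0 3, sq_nonneg u]
    _ ≤ (2 * √ω + 2 + (√ω * s - √x) ^ 2 / s) ^ 4 := by
        exact pow_le_pow_left₀ (by positivity) (by linarith) 4

theorem saddle_phase_eq {ω x r : ℝ} (hω : 0 ≤ ω) (hx : 0 ≤ x) (hr : 0 < r) :
    x * (√2 / 2 / (r + √2 / 2)) + ω * r * (√2 / 2) =
      √(2 * ω * x) - ω / 2 + √2 / 2 * ((√ω * (r + √2 / 2) - √x) ^ 2 / (r + √2 / 2)) := by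
  have : r + √2 / 2 ≠ 0 := by positivity
  have h2 : √2 ^ 2 = 2 := sq_sqrt zero_le_two
  rw [sqrt_mul (by positivity), sqrt_mul zero_le_two]
  nth_rw 1 [← sq_sqrt hx]
  nth_rw 1 [← sq_sqrt hω]
  nth_rw 3 [← sq_sqrt hω]
  field_simp
  linear_combination (-√2 * √ω ^ 2 - 2 * r * √ω ^ 2) * h2

theorem saddle_integrand_le {ω r : ℝ} {n : ℕ} (hω : 0 ≤ ω) (hn : 1 ≤ n) (hr : 0 < r) :
    n * (n + 2 * r) / (r + √2 / 2) ^ 4 * (r / (r + √2 / 2)) ^ (n - 2) * exp (-(ω * r * (√2 / 2))) ≤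
      15000 * exp ((2 * √ω + 2) / 5 + 2 + ω / 2) * exp (-√(2 * ω * n)) *
        exp (-((√ω * (r + √2 / 2) - √n) ^ 2 / (r + √2 / 2) / 2)) := by
  have hn' : (1 : ℝ) ≤ n := by exact_mod_cast hn
  have hphase := saddle_phase_eq hω n.cast_nonneg hr
  have h2 : 7 / 10 ≤ √2 / 2 := by nlinarith [sq_sqrt (zero_le_two (α := ℝ)), sqrt_nonneg 2]
  set s := r + √2 / 2 with hs
  set E := (√ω * s - √n) ^ 2 / s
  have : 0 < s := by positivity
  have hE : 0 ≤ E := by positivity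
  calc _ ≤ (n * (n + 2 * s) / s ^ 4) * exp (2 - n * (√2 / 2 / s)) *
        exp (-(ω * r * (√2 / 2))) := by
        gcongr
        · linarith
        · exact div_sub_pow_le_exp (by positivity) hr n
    _ ≤ 15000 * exp ((2 * √ω + 2 + E) / 5) * exp (2 - n * (√2 / 2 / s)) *
        exp (-(ω * r * (√2 / 2))) := by
        gcongr
        exact (mul_div_pow_four_le hn' (by linarith)).trans
          (pow_four_le_mul_exp (by positivity))
    -- As `√2/2 - 1/5 ≥ 1/2`, half of the exponent `E` survives absorbing the rational factor.
    _ ≤ _ := by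
        simp only [mul_assoc (15000 : ℝ), ← exp_add]
        refine mul_le_mul_of_nonneg_left (exp_le_exp.2 ?_) (by norm_num)
        nlinarith [mul_le_mul_of_nonneg_right h2 hE]

theorem norm_ratioPowDerivTwo_mul_exp_le {ω ω' r : ℝ} {n : ℕ} (hω : 0 ≤ ω) (hω' : ω ≤ ω')
    (hn : 1 ≤ n) (hr : 0 < r) :
    ‖ratioPowDerivTwo n (r * Complex.exp ((π / 4 : ℝ) * Complex.I)) *
        Complex.exp (ω' * (r * Complex.exp ((π / 4 : ℝ) * Complex.I)) * Complex.I)‖ ≤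
      15000 * exp ((2 * √ω + 2) / 5 + 2 + ω / 2) * exp (-√(2 * ω * n)) *
        exp (-((√ω * (r + √2 / 2) - √n) ^ 2 / (r + √2 / 2) / 2)) := by
  refine le_trans ?_ (saddle_integrand_le hω hn hr)
  set y : ℂ := r * Complex.exp ((π / 4 : ℝ) * Complex.I)
  have norm_y : ‖y‖ = r := by
    rw [norm_mul, Complex.norm_exp_ofReal_mul_I, mul_one, Complex.norm_of_nonneg hr.le]
  have hray : r + √2 / 2 ≤ ‖1 + y‖ := by
    simpa only [cos_pi_div_four] using add_cos_le_norm_one_add_mul_exp_I r (π / 4)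
  have norm_exp_eq : ‖Complex.exp (ω' * y * Complex.I)‖ = exp (-(ω' * r * (√2 / 2))) := by
    rw [Complex.norm_exp, Complex.mul_I_re, Complex.im_ofReal_mul, Complex.im_ofReal_mul,
      Complex.exp_ofReal_mul_I_im, sin_pi_div_four, mul_assoc]
  rw [norm_mul, norm_exp_eq]
  refine mul_le_mul ((norm_ratioPowDerivTwo_le hn y).trans ?_) (exp_le_exp.2 ?_) (exp_pos _).le
    (by positivity)
  · rw [norm_y]
    gcongr
  · gcongr

theorem exists_norm_integral_ratioPowDerivTwo_mul_exp_le {ω : ℝ} (hω : 0 < ω) :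
    ∃ C : ℝ, 0 < C ∧ ∀ n : ℕ, 1 ≤ n → ∀ ω' : ℝ, ω ≤ ω' →
      ‖∫ r in Set.Ioi (0 : ℝ), ratioPowDerivTwo n (r : ℂ) * Complex.exp (ω' * r * Complex.I)‖ ≤
        C * (n : ℝ) ^ (1 / 4 : ℝ) * exp (-√(2 * ω * n)) := by
  set A : ℝ := 15000 * exp ((2 * √ω + 2) / 5 + 2 + ω / 2)
  refine ⟨A * ((2 * √(π * √ω) + 8) / ω), by positivity, fun n hn ω' hω' => ?_⟩
  have hn' : (1 : ℝ) ≤ n := by exact_mod_cast hn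
  have sqrt_sqrt_n : √(√n) = (n : ℝ) ^ (1 / 4 : ℝ) := by
    rw [sqrt_eq_rpow, sqrt_eq_rpow, ← rpow_mul n.cast_nonneg]
    norm_num
  have one_le : 1 ≤ (n : ℝ) ^ (1 / 4 : ℝ) := one_le_rpow hn' (by norm_num)
  have rescale (s : ℝ) :
      (√ω * s - √n) ^ 2 / s / 2 = (ω * s - √ω * √n) ^ 2 / (2 * (ω * s)) := by
    have : ω * s - √ω * √n = √ω * (√ω * s - √n) := by
      rw [mul_sub, ← mul_assoc, mul_self_sqrt hω.le]
    rw [this, mul_pow, sq_sqrt hω.le]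
    field_simp
  have ray_bound := norm_integral_Ioi_le_of_norm_le_mul_exp (c := √2 / 2)
    (p := √ω * √n) (K := A * exp (-√(2 * ω * n))) (by positivity) hω (by positivity)
    (by positivity) fun r hr =>
      (norm_ratioPowDerivTwo_mul_exp_le hω.le hω' hn hr).trans_eq
        (by rw [rescale])
  rw [integral_ratioPowDerivTwo_mul_exp_eq hn (hω.le.trans hω') (θ := π / 4) (by positivity)
    (by linarith [pi_pos]), norm_mul, Complex.norm_exp_ofReal_mul_I, one_mul]
  refine ray_bound.trans ?_
  have : 2 * √(π * (√ω * √n)) + 8 ≤ (2 * √(π * √ω) + 8) * (n : ℝ) ^ (1 / 4 : ℝ) := by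
    rw [← mul_assoc, sqrt_mul (by positivity), sqrt_sqrt_n]
    linarith
  calc _ ≤ A * exp (-√(2 * ω * n)) * ((2 * √(π * √ω) + 8) * (n : ℝ) ^ (1 / 4 : ℝ) / ω) := by
        gcongr
    _ = _ := by ring

end SaddlePoint

section Remainder

variable {n : ℕ}

theorem abs_integral_ratioPowDerivTwo_mul_cos_le (hn : 1 ≤ n) (ω : ℝ) :
    |∫ x in Set.Ioi (0 : ℝ), ratioPowDerivTwo n x * cos (ω * x)| ≤
      ‖∫ r in Set.Ioi (0 : ℝ), ratioPowDerivTwo n (r : ℂ) * Complex.exp (ω * r * Complex.I)‖ := by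
  have hint : IntegrableOn (fun r : ℝ =>
      ratioPowDerivTwo n (r : ℂ) * Complex.exp (ω * r * Complex.I)) (Set.Ioi 0) := by
    simp only [← ofReal_ratioPowDerivTwo]
    refine (integrableOn_ratioPowDerivTwo hn).ofReal.mul_bdd (c := 1)
      (Continuous.aestronglyMeasurable (by fun_prop)) (ae_of_all _ fun r => ?_)
    rw [← Complex.ofReal_mul, Complex.norm_exp_ofReal_mul_I]
  refine le_of_eq_of_le (congrArg abs ?_) (Complex.abs_re_le_norm _)
  refine Eq.trans (integral_congr_ae (ae_of_all _ fun r => ?_)) (integral_re hint)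
  simp only [RCLike.re_to_complex, ← ofReal_ratioPowDerivTwo, ← Complex.ofReal_mul,
    Complex.re_ofReal_mul, Complex.exp_ofReal_mul_I_re]

theorem exists_abs_integral_ratioPowDerivTwo_div_mul_bernoulliFun_two_fract_le {a : ℝ}
    (ha : 0 < a) : ∃ C : ℝ, 0 < C ∧ ∀ n : ℕ, 1 ≤ n →
      |∫ x in Set.Ioi (0 : ℝ), ratioPowDerivTwo n (x / a) * bernoulliFun 2 (Int.fract x)| ≤
        C * (n : ℝ) ^ (1 / 4 : ℝ) * exp (-√(4 * π * a * n)) := by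
  obtain ⟨C, hC, saddle_bound⟩ :=
    exists_norm_integral_ratioPowDerivTwo_mul_exp_le (ω := 2 * π * a) (by positivity)
  refine ⟨a * C / 6, by positivity, fun n hn => ?_⟩
  refine (abs_integral_mul_bernoulliFun_two_fract_le (integrableOn_ratioPowDerivTwo_div hn ha)
    (B := a * (C * (n : ℝ) ^ (1 / 4 : ℝ) * exp (-√(2 * (2 * π * a) * n)))) fun k hk => ?_).trans_eq
      (by rw [show 2 * (2 * π * a) = 4 * π * a by ring]; ring)
  have rescale : ∫ x in Set.Ioi (0 : ℝ), ratioPowDerivTwo n (x / a) * cos (2 * π * k * x) =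
      a * ∫ y in Set.Ioi (0 : ℝ), ratioPowDerivTwo n y * cos (2 * π * k * a * y) := by
    have h := integral_comp_mul_left_Ioi
      (fun y => ratioPowDerivTwo n y * cos (2 * π * k * a * y)) 0 (inv_pos.2 ha)
    rw [mul_zero, inv_inv, smul_eq_mul] at h
    rw [← h]
    refine setIntegral_congr_fun measurableSet_Ioi fun x _ => ?_
    field_simp
  have hk' : (1 : ℝ) ≤ k := by exact_mod_cast Nat.one_le_iff_ne_zero.2 hk
  rw [rescale, abs_mul, abs_of_pos ha]
  gcongr
  refine (abs_integral_ratioPowDerivTwo_mul_cos_le hn _).trans (saddle_bound n hn _ ?_)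
  nlinarith [mul_pos pi_pos ha]

end Remainder

section AlternatingSum

theorem one_sub_pow_sub_one_add_mul (u : ℝ) (n : ℕ) :
    (1 - u) ^ n - 1 + n * u = ∑ l ∈ Icc 2 n, (-1) ^ l * n.choose l * u ^ l := by
  rcases n.eq_zero_or_pos with rfl | hn
  · simp
  · have hIcc : Icc 2 n = Ico (0 + 1 + 1) (n + 1) := by
      ext; simp
    rw [sub_eq_neg_add 1 u, add_pow, range_eq_Ico, sum_eq_sum_Ico_succ_bot (by lia),
      sum_eq_sum_Ico_succ_bot (by lia), hIcc]
    simp only [one_pow, neg_pow u, mul_one, mul_right_comm _ (u ^ _)]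
    simp

theorem hasSum_alternating_choose_mul_hurwitz {a : ℝ} (ha : 0 < a) (n : ℕ) :
    HasSum (fun m : ℕ => (m / (m + a)) ^ n - 1 + n * (a / (m + a)))
      (∑ l ∈ Icc 2 n, (-1) ^ l * n.choose l * (a ^ l * ∑' j : ℕ, 1 / (j + a) ^ l)) := by
  have hurwitz (l : ℕ) (hl : 2 ≤ l) :
      HasSum (fun j : ℕ => 1 / (j + a) ^ l) (∑' j : ℕ, 1 / (j + a) ^ l) := by
    refine Summable.hasSum ?_
    refine ((Real.summable_one_div_nat_add_rpow a l).2 (by exact_mod_cast hl)).congr fun j => ?_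
    rw [rpow_natCast, abs_of_pos (by positivity)]
  refine (hasSum_sum fun l hl => ((hurwitz l (mem_Icc.1 hl).1).mul_left (a ^ l)).mul_left
    ((-1) ^ l * n.choose l : ℝ)).congr_fun fun m => ?_
  have hm : (m : ℝ) / (m + a) = 1 - a / (m + a) := by
    field_simp
    ring
  rw [hm, one_sub_pow_sub_one_add_mul]
  simp only [div_pow, mul_one_div]

end AlternatingSum

section Antiderivative

theorem integral_div_one_add_pow_div (n : ℕ) {T : ℝ} (hT : 0 ≤ T) :
    ∫ y in (0 : ℝ)..T, (y / (1 + y)) ^ n / (1 + y) =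
      log (1 + T) - ∑ i ∈ range n, (T / (1 + T)) ^ (i + 1) / (i + 1) := by
  have one_add_ne {y : ℝ} (hy : y ∈ [[0, T]]) : 1 + y ≠ 0 := by
    rw [Set.uIcc_of_le hT] at hy
    linarith [hy.1]
  have hderiv (y : ℝ) (hy : y ∈ [[0, T]]) :
      HasDerivAt (fun y => log (1 + y) - ∑ i ∈ range n, (y / (1 + y)) ^ (i + 1) / (i + 1))
        ((y / (1 + y)) ^ n / (1 + y)) y := by
    have hy1 := one_add_ne hy
    refine ((((hasDerivAt_id y).const_add 1).log hy1).sub (HasDerivAt.fun_sum fun i _ =>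
      (hasDerivAt_div_one_add_pow (n := i + 1) hy1).div_const (i + 1 : ℝ))).congr_deriv ?_
    have summand (i : ℕ) : ((i + 1 : ℕ) : ℝ) * (y / (1 + y)) ^ (i + 1 - 1) / (1 + y) ^ 2 / (i + 1) =
        (y / (1 + y)) ^ i * (1 / (1 + y)) ^ 2 := by
      rw [Nat.add_sub_cancel]
      push_cast
      field_simp
    have hgeom := mul_neg_geom_sum (y / (1 + y)) n
    have hcompl : 1 - y / (1 + y) = 1 / (1 + y) := by field_simp; ring
    rw [hcompl] at hgeom
    simp only [summand, ← sum_mul, id_eq]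
    linear_combination -(1 / (1 + y)) * hgeom
  rw [intervalIntegral.integral_eq_sub_of_hasDerivAt hderiv]
  · simp
  · refine ContinuousOn.intervalIntegrable fun y hy => ContinuousAt.continuousWithinAt ?_
    fun_prop (disch := exact one_add_ne hy)

theorem integral_div_one_add_pow_sub_one (n : ℕ) {T : ℝ} (hT : 0 ≤ T) :
    ∫ y in (0 : ℝ)..T, ((y / (1 + y)) ^ n - 1) =
      (∑ j ∈ range n, ∑ i ∈ range j, (T / (1 + T)) ^ (i + 1) / (i + 1)) - n * log (1 + T) := by
  have one_add_ne {y : ℝ} (hy : y ∈ [[0, T]]) : 1 + y ≠ 0 := by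
    rw [Set.uIcc_of_le hT] at hy
    linarith [hy.1]
  have hgeom : Set.EqOn (fun y : ℝ => (y / (1 + y)) ^ n - 1)
      (fun y => -∑ j ∈ range n, (y / (1 + y)) ^ j / (1 + y)) [[0, T]] := fun y hy => by
    have hcompl : y / (1 + y) - 1 = -(1 / (1 + y)) := by
      have := one_add_ne hy
      field_simp
      ring
    have h := geom_sum_mul (y / (1 + y)) n
    rw [hcompl] at h
    beta_reduce
    rw [← sum_div, ← h]
    ring
  rw [intervalIntegral.integral_congr hgeom, intervalIntegral.integral_neg,
    intervalIntegral.integral_finsetSum fun j _ => ContinuousOn.intervalIntegrable fun y hy =>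
      ContinuousAt.continuousWithinAt (by fun_prop (disch := exact one_add_ne hy))]
  simp only [integral_div_one_add_pow_div _ hT, sum_sub_distrib, sum_const, card_range,
    nsmul_eq_mul, neg_sub]

theorem harm_succ (n : ℕ) : harm (n + 1) = harm n + 1 / (n + 1) := by
  rw [harm, sum_Icc_succ_top (by lia), harm, Nat.cast_succ]

theorem harm_eq_sum_range (n : ℕ) : harm n = ∑ i ∈ range n, 1 / ((i : ℝ) + 1) :=
  (sum_range_induction _ harm (by simp [harm]) n fun k _ => harm_succ k).symm

theorem sum_range_harm (n : ℕ) : ∑ j ∈ range n, harm j = n * (harm n - 1) := by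
  induction n with
  | zero => simp
  | succ n ih =>
    rw [sum_range_succ, ih, harm_succ]
    push_cast
    field_simp
    ring

theorem tendsto_div_one_add_atTop : Tendsto (fun T : ℝ => T / (1 + T)) atTop (𝓝 1) := by
  have h : Tendsto (fun T : ℝ => 1 - (1 + T)⁻¹) atTop (𝓝 (1 - 0)) :=
    (tendsto_inv_atTop_zero.comp (tendsto_atTop_add_const_left _ 1 tendsto_id)).const_sub 1
  rw [sub_zero] at h
  refine h.congr' ?_
  filter_upwards [eventually_ge_atTop 0] with T hT
  field_simp
  ring

theorem tendsto_integral_div_one_add_pow_sub_one_add_log (n : ℕ) :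
    Tendsto (fun T => (∫ y in (0 : ℝ)..T, ((y / (1 + y)) ^ n - 1)) + n * log (1 + T)) atTop
      (𝓝 (n * (harm n - 1))) := by
  have h : Tendsto (fun T : ℝ => ∑ j ∈ range n, ∑ i ∈ range j, (T / (1 + T)) ^ (i + 1) / (i + 1))
      atTop (𝓝 (∑ j ∈ range n, ∑ i ∈ range j, (1 : ℝ) ^ (i + 1) / (i + 1))) :=
    tendsto_finsetSum _ fun j _ => tendsto_finsetSum _ fun i _ =>
      (tendsto_div_one_add_atTop.pow (i + 1)).div_const _
  simp only [one_pow, ← harm_eq_sum_range, sum_range_harm] at h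
  refine h.congr' ?_
  filter_upwards [eventually_ge_atTop 0] with T hT
  rw [integral_div_one_add_pow_sub_one n hT, sub_add_cancel]

end Antiderivative

section Digamma

theorem differentiableAt_log_Gamma {x : ℝ} (hx : 0 < x) : DifferentiableAt ℝ (log ∘ Gamma) x :=
  (differentiableOn_Gamma_Ioi.differentiableAt (Ioi_mem_nhds hx)).log (Gamma_pos_of_pos hx).ne'

theorem deriv_log_comp_Gamma {x : ℝ} (hx : 0 < x) : deriv (log ∘ Gamma) x = logDeriv Gamma x :=
  Real.deriv_log_comp_eq_logDeriv
    (differentiableOn_Gamma_Ioi.differentiableAt (Ioi_mem_nhds hx)) (Gamma_pos_of_pos hx).ne'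

theorem log_Gamma_add_one {x : ℝ} (hx : 0 < x) :
    (log ∘ Gamma) (x + 1) = (log ∘ Gamma) x + log x := by
  simp only [Function.comp_apply, Gamma_add_one hx.ne', log_mul hx.ne' (Gamma_pos_of_pos hx).ne',
    add_comm]

theorem logDeriv_Gamma_add_one {x : ℝ} (hx : 0 < x) :
    logDeriv Gamma (x + 1) = logDeriv Gamma x + 1 / x := by
  rw [← deriv_log_comp_Gamma hx, ← deriv_log_comp_Gamma (by positivity), ← deriv_comp_add_const,
    one_div, ← deriv_log, ← deriv_add (differentiableAt_log_Gamma hx) (differentiableAt_log hx.ne')]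
  apply EventuallyEq.deriv_eq
  filter_upwards [eventually_gt_nhds hx] with y hy using log_Gamma_add_one hy

theorem slope_log_Gamma_add_one {x : ℝ} (hx : 0 < x) :
    slope (log ∘ Gamma) x (x + 1) = log x := by
  rw [slope_def_field, log_Gamma_add_one hx]
  ring

theorem logDeriv_Gamma_le_log {x : ℝ} (hx : 0 < x) : logDeriv Gamma x ≤ log x := by
  rw [← deriv_log_comp_Gamma hx, ← slope_log_Gamma_add_one hx]
  exact convexOn_log_Gamma.deriv_le_slope hx (Set.mem_Ioi.2 (by positivity)) (lt_add_one x)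
    (differentiableAt_log_Gamma hx)

theorem log_le_logDeriv_Gamma_add_one {x : ℝ} (hx : 0 < x) : log x ≤ logDeriv Gamma (x + 1) := by
  rw [← deriv_log_comp_Gamma (by positivity), ← slope_log_Gamma_add_one hx]
  exact convexOn_log_Gamma.slope_le_deriv hx (Set.mem_Ioi.2 (by positivity)) (lt_add_one x)
    (differentiableAt_log_Gamma (by positivity))

theorem sum_range_one_div_add {a : ℝ} (ha : 0 < a) (M : ℕ) :
    ∑ m ∈ range M, 1 / (m + a) = logDeriv Gamma (M + a) - logDeriv Gamma a := by
  induction M with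
  | zero => simp
  | succ M ih =>
    rw [sum_range_succ, ih, Nat.cast_succ, add_right_comm, logDeriv_Gamma_add_one (by positivity)]
    ring

theorem tendsto_logDeriv_Gamma_sub_log :
    Tendsto (fun x => logDeriv Gamma x - log x) atTop (𝓝 0) := by
  refine tendsto_of_tendsto_of_tendsto_of_le_of_le' (g := fun x => -(1 / x))
    (by simpa using (tendsto_inv_atTop_zero (𝕜 := ℝ)).neg) tendsto_const_nhds ?_ ?_
  · filter_upwards [eventually_gt_atTop 0] with x hx
    linarith [log_le_logDeriv_Gamma_add_one hx, logDeriv_Gamma_add_one hx]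
  · filter_upwards [eventually_gt_atTop 0] with x hx
    linarith [logDeriv_Gamma_le_log hx]

theorem tendsto_sum_one_div_add_sub_log {a : ℝ} (ha : 0 < a) :
    Tendsto (fun M : ℕ => ∑ m ∈ range M, 1 / (m + a) - log (M + a)) atTop
      (𝓝 (-logDeriv Gamma a)) := by
  have h := (tendsto_logDeriv_Gamma_sub_log.comp (tendsto_atTop_add_const_right _ a
    tendsto_natCast_atTop_atTop)).sub_const (logDeriv Gamma a)
  rw [zero_sub] at h
  refine h.congr fun M => ?_
  rw [Function.comp_apply, sum_range_one_div_add ha]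
  ring

theorem logDeriv_Gamma_one_half :
    logDeriv Gamma (1 / 2) = -(eulerMascheroniConstant + 2 * log 2) := by
  rw [logDeriv_apply, hasDerivAt_Gamma_one_half.deriv, Gamma_one_half_eq]
  field_simp

end Digamma

section ExactFormula

variable {a : ℝ} {n : ℕ}

theorem sum_range_div_add_pow_sub_one (ha : 0 < a) (hn : 2 ≤ n) (M : ℕ) :
    ∑ m ∈ range M, ((m / (m + a)) ^ n - 1) =
      a * (∫ y in (0 : ℝ)..M / a, ((y / (1 + y)) ^ n - 1)) - (M / a / (1 + M / a)) ^ n / 2 +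
        n * (M / a / (1 + M / a)) ^ (n - 1) / (1 + M / a) ^ 2 / a / 12 -
        (∫ x in (0 : ℝ)..M, ratioPowDerivTwo n (x / a) * bernoulliFun 2 (Int.fract x)) /
          (2 * a ^ 2) := by
  have one_add_ne {x : ℝ} (hx : 0 ≤ x) : 1 + x / a ≠ 0 := by positivity
  have hasDerivAt_comp_div {g : ℝ → ℝ} {g' x : ℝ} (hg : HasDerivAt g g' (x / a)) :
      HasDerivAt (fun x => g (x / a)) (g' / a) x :=
    (hg.comp x ((hasDerivAt_id x).div_const a)).congr_deriv (mul_one_div _ _)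
  have h := sum_range_eq_integral_sub_integral_bernoulliFun_two
    (fun x hx => (hasDerivAt_comp_div
      (hasDerivAt_div_one_add_pow (n := n) (one_add_ne hx))).sub_const 1)
    (fun x hx => (hasDerivAt_comp_div
      (hasDerivAt_div_one_add_pow_deriv hn (one_add_ne hx))).div_const a)
    (fun x hx => ContinuousAt.continuousWithinAt <| by
      have := (differentiableAt_ratioPowDerivTwo (n := n) (one_add_ne hx)).continuousAt
      fun_prop) M
  have hsummand (m : ℕ) : (m : ℝ) / (m + a) = m / a / (1 + m / a) := by
    field_simp
    ring
  have hintegral := intervalIntegral.integral_comp_div (a := 0) (b := M)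
    (fun y : ℝ => (y / (1 + y)) ^ n - 1) ha.ne'
  have hremainder (x : ℝ) : ratioPowDerivTwo n (x / a) / a / a * bernoulliFun 2 (Int.fract x) =
      ratioPowDerivTwo n (x / a) * bernoulliFun 2 (Int.fract x) / a ^ 2 := by
    field_simp
  rw [zero_div, smul_eq_mul] at hintegral
  simp only [hsummand, h, hremainder, hintegral, intervalIntegral.integral_div, zero_div,
    zero_pow (by lia : n ≠ 0), zero_pow (by lia : n - 1 ≠ 0), mul_zero]
  ring

theorem tendsto_sum_range_div_add_pow_sub_one_add (ha : 0 < a) (hn : 2 ≤ n) :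
    Tendsto (fun M : ℕ => ∑ m ∈ range M, ((m / (m + a)) ^ n - 1 + n * (a / (m + a)))) atTop
      (𝓝 (a * n * (harm n - logDeriv Gamma a + log a - 1) - 1 / 2 -
        (∫ x in Set.Ioi (0 : ℝ), ratioPowDerivTwo n (x / a) * bernoulliFun 2 (Int.fract x)) /
          (2 * a ^ 2))) := by
  have hMa : Tendsto (fun M : ℕ => (M : ℝ) / a) atTop atTop :=
    tendsto_natCast_atTop_atTop.atTop_div_const ha
  have main_term := ((tendsto_integral_div_one_add_pow_sub_one_add_log n).comp hMa).const_mul a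
  have endpoint_value := ((tendsto_div_one_add_atTop.comp hMa).pow n).div_const 2
  have endpoint_deriv : Tendsto (fun M : ℕ => (n : ℝ) * (M / a / (1 + M / a)) ^ (n - 1) /
      (1 + M / a) ^ 2 / a / 12) atTop (𝓝 0) := by
    have denom := (tendsto_pow_atTop two_ne_zero).comp (tendsto_atTop_add_const_left _ (1 : ℝ) hMa)
    simpa using ((((tendsto_div_one_add_atTop.comp hMa).pow (n - 1)).const_mul (n : ℝ)).div_atTop
      denom).div_const a |>.div_const 12
  have remainder : Tendsto (fun M : ℕ => (∫ x in (0 : ℝ)..M,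
      ratioPowDerivTwo n (x / a) * bernoulliFun 2 (Int.fract x)) / (2 * a ^ 2)) atTop
      (𝓝 ((∫ x in Set.Ioi (0 : ℝ), ratioPowDerivTwo n (x / a) * bernoulliFun 2 (Int.fract x)) /
        (2 * a ^ 2))) :=
    (intervalIntegral_tendsto_integral_Ioi 0 (integrable_mul_bernoulliFun_fract (by decide)
      (integrableOn_ratioPowDerivTwo_div (one_le_two.trans hn) ha))
      tendsto_natCast_atTop_atTop).div_const _
  have harmonic_part := (tendsto_sum_one_div_add_sub_log ha).const_mul (a * n)
  have h := ((((main_term.sub endpoint_value).add endpoint_deriv).sub remainder).add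
    harmonic_part).add_const (a * n * log a)
  convert! h using 2 with M
  · have hlog : log (M + a) = log (1 + M / a) + log a := by
      rw [← log_mul (by positivity) ha.ne', add_mul, one_mul, div_mul_cancel₀ _ ha.ne', add_comm]
    have hsum : ∑ m ∈ range M, n * (a / (m + a)) = a * n * ∑ m ∈ range M, 1 / (m + a) := by
      rw [mul_sum]
      exact sum_congr rfl fun m _ => by ring
    rw [sum_add_distrib, sum_range_div_add_pow_sub_one ha hn, hsum]
    simp only [Function.comp_apply, hlog]
    ring
  · rw [one_pow]
    ring

theorem sum_alternating_choose_mul_hurwitz (ha : 0 < a) (hn : 2 ≤ n) :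
    ∑ l ∈ Icc 2 n, (-1) ^ l * n.choose l * (a ^ l * ∑' j : ℕ, 1 / (j + a) ^ l) =
      a * n * (harm (n - 1) - logDeriv Gamma a + log a - 1) + a - 1 / 2 -
        (∫ x in Set.Ioi (0 : ℝ), ratioPowDerivTwo n (x / a) * bernoulliFun 2 (Int.fract x)) /
          (2 * a ^ 2) := by
  rw [tendsto_nhds_unique (hasSum_alternating_choose_mul_hurwitz ha n).tendsto_sum_nat
    (tendsto_sum_range_div_add_pow_sub_one_add ha hn)]
  obtain ⟨m, rfl⟩ := Nat.exists_eq_add_of_le' (one_le_two.trans hn)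
  rw [harm_succ, Nat.add_sub_cancel]
  push_cast
  field_simp
  ring

end ExactFormula

theorem zeta_differences_asymptotics_half_general {a : ℝ} (ha : 0 < a) :
    ∃ C : ℝ, 0 < C ∧ ∀ n : ℕ, 2 ≤ n →
      |∑ l ∈ Icc 2 n, (-1) ^ l * n.choose l * (a ^ l * ∑' j : ℕ, 1 / (j + a) ^ l) -
          (a * n * (harm (n - 1) - logDeriv Gamma a + log a - 1) + a - 1 / 2)| ≤
        C * (n : ℝ) ^ ((1 : ℝ) / 4) * exp (-√(4 * π * a * n)) := by
  obtain ⟨C, hC, remainder_le⟩ :=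
    exists_abs_integral_ratioPowDerivTwo_div_mul_bernoulliFun_two_fract_le ha
  refine ⟨C / (2 * a ^ 2), by positivity, fun n hn => ?_⟩
  rw [sum_alternating_choose_mul_hurwitz ha hn, sub_sub_cancel_left, abs_neg, abs_div,
    abs_of_pos (by positivity : 0 < 2 * a ^ 2), div_mul_eq_mul_div, div_mul_eq_mul_div]
  gcongr
  exact remainder_le n (one_le_two.trans hn)

theorem one_half_pow_mul_tsum_one_div_add_one_half_pow {l : ℕ} (hl : 2 ≤ l) :
    (1 / 2 : ℝ) ^ l * ∑' j : ℕ, 1 / ((j : ℝ) + 1 / 2) ^ l =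
      (1 - (2 : ℝ) ^ (-(l : ℤ))) * ∑' j : ℕ, 1 / ((j : ℝ) + 1) ^ l := by
  set f : ℕ → ℝ := fun j => 1 / ((j : ℝ) + 1) ^ l
  have hf : Summable f := by
    simpa [f] using (summable_nat_add_iff 1).2 (Real.summable_one_div_nat_pow (p := l).2 hl)
  have even_term (j : ℕ) : f (2 * j) = (1 / 2) ^ l * (1 / (j + 1 / 2) ^ l) := by
    simp only [f, ← one_div_pow, ← mul_pow]
    push_cast
    field_simp
  have odd_term (j : ℕ) : f (2 * j + 1) = 2 ^ (-(l : ℤ)) * f j := by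
    simp only [f, zpow_neg, zpow_natCast]
    push_cast
    rw [show 2 * (j : ℝ) + 1 + 1 = 2 * (j + 1) by ring, mul_pow]
    field_simp
  have h := tsum_even_add_odd (hf.comp_injective (mul_right_injective₀ two_ne_zero))
    (hf.comp_injective ((add_left_injective 1).comp (mul_right_injective₀ two_ne_zero)))
  simp only [even_term, odd_term, tsum_mul_left] at h
  linear_combination h

/-- The case `m = 1, k = 2` of the asymptotics for `H_n(m,k)`, using
`2^{-l} ζ(l, 1/2) = (1 - 2^{-l}) ζ(l)`:
`∑_{l=2}^n (-1)^l C(n,l)(1 - 2^{-l}) ζ(l) = (n/2)(h_{n-1} + γ + log 2 - 1)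
  + O(n^{1/4} e^{-√(2πn)})`. -/
theorem zeta_differences_asymptotics_half :
    ∃ C : ℝ, 0 < C ∧ ∀ n : ℕ, 2 ≤ n →
      |(∑ l ∈ Finset.Icc 2 n, (-1 : ℝ) ^ l * (n.choose l : ℝ) * (1 - (2 : ℝ) ^ (-(l : ℤ))) *
            (∑' j : ℕ, 1 / ((j : ℝ) + 1) ^ l)) -
          ((n : ℝ) / 2) * (harm (n - 1) + Real.eulerMascheroniConstant + Real.log 2 - 1)| ≤
        C * (n : ℝ) ^ ((1 : ℝ) / 4) * Real.exp (-Real.sqrt (2 * Real.pi * n)) := by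
  obtain ⟨C, hC, h⟩ := zeta_differences_asymptotics_half_general (a := 1 / 2) (by norm_num)
  refine ⟨C, hC, fun n hn => ?_⟩
  convert! h n hn using 3
  · refine sum_congr rfl fun l hl => ?_
    rw [one_half_pow_mul_tsum_one_div_add_one_half_pow (mem_Icc.1 hl).1, mul_assoc]
  · rw [logDeriv_Gamma_one_half, one_div, log_inv]
    ring
  · rw [show 4 * π * (1 / 2) * n = 2 * π * n by ring]
end
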